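/- arXiv:2101.01567 — 9 statements merged into one kernel-verified Lean document; each statement's English description precedes it below -/
import Mathlib

section
/- Let n ∈ ℕ have binary digits a_k (so n = Σ_{k≥0} a_k 2^k with a_k ∈ {0,1}), let i ∈ {1,3,5,7} and k ∈ ℕ. Then A_{i,k}(n) ≡ a_{k+3} (mod 2) if a_k + 2a_{k+1} + 4a_{k+2} < i, and A_{i,k}(n) ≡ a_{k+3} + 1 (mod 2) if a_k + 2a_{k+1} + 4a_{k+2} ≥ i. -/
/-!
The inequality `2 ^ k * x ≤ n` says `x ≤ m`, where `m = n / 2 ^ k`. Writing `x = 8 * j + i`,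
the admissible `j` are those below `(m + 8 - i) / 8` (`Aik_eq`). This is `m / 8` when `m % 8 < i`
and `m / 8 + 1` otherwise. The digits of `n` at positions `k, k + 1, k + 2` spell out `m % 8`, and
the digit at `k + 3` is the parity of `m / 8`.
-/

/-- `bit n k` is the k-th binary digit of `n` (so `n = Σ_k bit n k * 2^k`). -/
def bit (n k : ℕ) : ℕ := n / 2 ^ k % 2

/-- `Aik i k n` = #{x : x ≡ i (mod 8) and 2^k * x ≤ n}. -/
noncomputable def Aik (i k n : ℕ) : ℕ :=
  Nat.card {x : ℕ | x % 8 = i ∧ 2 ^ k * x ≤ n}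

/-- Adding `8 - i` before dividing counts the `x = i` term exactly when `i ≤ n / 2 ^ k`; the
truncated subtraction is harmless because `i < 8`. -/
theorem Aik_eq (n i k : ℕ) (hi : i < 8) : Aik i k n = (n / 2 ^ k + 8 - i) / 8 := by
  have h : {x : ℕ | x % 8 = i ∧ 2 ^ k * x ≤ n} =
      ((Finset.range ((n / 2 ^ k + 8 - i) / 8)).image (fun j => 8 * j + i) : Finset ℕ) := by
    ext x
    have hx : 2 ^ k * x ≤ n ↔ x ≤ n / 2 ^ k := by
      rw [Nat.le_div_iff_mul_le (by positivity), mul_comm]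
    simp only [Set.mem_ofPred_eq, hx, Finset.coe_image, Finset.coe_range, Set.mem_image,
      Set.mem_Iio]
    constructor
    · rintro ⟨h1, h2⟩
      exact ⟨x / 8, by omega, by omega⟩
    · rintro ⟨j, h1, rfl⟩
      omega
  have hinj : Function.Injective (fun j : ℕ => 8 * j + i) := fun a b hab => by
    simp only at hab
    omega
  rw [Aik, h, Nat.card_coe_set_eq, Set.ncard_coe_finset, Finset.card_image_of_injective _ hinj,
    Finset.card_range]

theorem stmt_1 (n : ℕ) (i : ℕ) (hi : i ∈ ({1, 3, 5, 7} : Set ℕ)) (k : ℕ) :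
    (bit n k + 2 * bit n (k + 1) + 4 * bit n (k + 2) < i →
      Aik i k n ≡ bit n (k + 3) [MOD 2]) ∧
    (bit n k + 2 * bit n (k + 1) + 4 * bit n (k + 2) ≥ i →
      Aik i k n ≡ bit n (k + 3) + 1 [MOD 2]) := by
  have hi8 : 1 ≤ i ∧ i < 8 := by
    simp only [Set.mem_insert_iff, Set.mem_singleton_iff] at hi
    omega
  rw [Aik_eq n i k hi8.2]
  simp only [bit, pow_add, ← Nat.div_div_eq_div_mul, Nat.ModEq]
  norm_num only
  -- The digits are now those of `m` at positions `0` to `3`.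
  generalize n / 2 ^ k = m
  omega
end

section
/- Let n ∈ ℕ have binary digits a_k (so n = Σ_{k≥0} a_k 2^k with a_k ∈ {0,1}) and let i ∈ {1,3,5,7}. Then A_i(n) ≡ Σ_{k ≥ 0} a_{k+3} + #{k ≥ 0 : a_k + 2a_{k+1} + 4a_{k+2} ≥ i} (mod 2). -/
/-- `A n x` = the number of exponents `k ≥ 0` with `2^k * x ≤ n`
(equals `max {k : 2^k * x ≤ n} + 1` when `1 ≤ x ≤ n`). -/
def A (n x : ℕ) : ℕ :=
  ((Finset.range (n + 1)).filter (fun k => 2 ^ k * x ≤ n)).card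

/-- `Ai i n` = Σ_{x ≤ n, x ≡ i (mod 8)} A(n, x). -/
def Ai (i n : ℕ) : ℕ :=
  ∑ x ∈ (Finset.range (n + 1)).filter (fun x => x % 8 = i), A n x

lemma card_residue (i m : ℕ) (h0 : 0 < i) (h8 : i < 8) :
    ((Finset.range (m + 1)).filter (fun x => x % 8 = i)).card
      = m / 8 + if i ≤ m % 8 then 1 else 0 := by
  induction m with
  | zero =>
    have h : ¬ i ≤ 0 := by omega
    simp [Finset.filter_singleton, h, h0.ne]
  | succ m ih =>
    rw [Finset.range_add_one, Finset.filter_insert]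
    split_ifs with h1 h2 h2
    · rw [Finset.card_insert_of_notMem (by simp), ih]
      split_ifs <;> omega
    · omega
    · rw [ih]
      split_ifs <;> omega
    · rw [ih]
      split_ifs <;> omega

/-- Exchange of summation: the pairs `(x, k)` with `2 ^ k * x ≤ n` are counted by `k` first. -/
lemma Ai_eq_sum (i n : ℕ) :
    Ai i n = ∑ k ∈ Finset.range (n + 1),
      ((Finset.range (n / 2 ^ k + 1)).filter (fun x => x % 8 = i)).card := by
  unfold Ai A
  simp_rw [Finset.card_filter _ (Finset.range (n + 1))]
  rw [Finset.sum_comm]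
  refine Finset.sum_congr rfl fun k _ => ?_
  rw [← Finset.card_filter, Finset.filter_filter]
  congr 1
  ext x
  have h : x ≤ n / 2 ^ k ↔ 2 ^ k * x ≤ n := by
    rw [Nat.le_div_iff_mul_le (by positivity), mul_comm]
  have h' : n / 2 ^ k ≤ n := Nat.div_le_self _ _
  simp only [Finset.mem_filter, Finset.mem_range, ← h]
  omega

lemma bit_eq_zero {n k : ℕ} (h : n < k) : bit n k = 0 := by
  have : n < 2 ^ k := h.trans Nat.lt_two_pow_self
  simp [bit, Nat.div_eq_of_lt this]

lemma bit_add (n k j : ℕ) : bit n (k + j) = n / 2 ^ k / 2 ^ j % 2 := by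
  rw [bit, pow_add, Nat.div_div_eq_div_mul]

lemma window_eq (n k : ℕ) :
    bit n k + 2 * bit n (k + 1) + 4 * bit n (k + 2) = n / 2 ^ k % 8 := by
  rw [bit_add, bit_add, bit]
  omega

theorem stmt_2 (n : ℕ) (i : ℕ) (hi : i ∈ ({1, 3, 5, 7} : Set ℕ)) :
    Ai i n ≡ (∑ᶠ k : ℕ, bit n (k + 3)) +
      Nat.card {k : ℕ | bit n k + 2 * bit n (k + 1) + 4 * bit n (k + 2) ≥ i} [MOD 2] := by
  have hi' : 0 < i ∧ i < 8 := by
    simp only [Set.mem_insert_iff, Set.mem_singleton_iff] at hi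
    omega
  have hsum : (∑ᶠ k : ℕ, bit n (k + 3)) = ∑ k ∈ Finset.range (n + 1), bit n (k + 3) := by
    apply finsum_eq_sum_of_support_subset
    intro k hk
    by_contra h
    simp only [Finset.coe_range, Set.mem_Iio] at h
    exact hk (bit_eq_zero (by omega))
  have hset : {k : ℕ | bit n k + 2 * bit n (k + 1) + 4 * bit n (k + 2) ≥ i}
      = ((Finset.range (n + 1)).filter (fun k => i ≤ n / 2 ^ k % 8) : Finset ℕ) := by
    ext k
    simp only [Set.mem_ofPred_eq, Finset.coe_filter, Finset.mem_range, ge_iff_le, window_eq]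
    refine ⟨fun h => ⟨?_, h⟩, fun h => h.2⟩
    by_contra hk
    have : n < 2 ^ k := (show n < k by omega).trans Nat.lt_two_pow_self
    rw [Nat.div_eq_of_lt this] at h
    omega
  have hcard : Nat.card {k : ℕ | bit n k + 2 * bit n (k + 1) + 4 * bit n (k + 2) ≥ i}
      = ∑ k ∈ Finset.range (n + 1), if i ≤ n / 2 ^ k % 8 then 1 else 0 := by
    rw [Nat.card_coe_set_eq, hset, Set.ncard_coe_finset, Finset.card_filter]
  rw [hsum, hcard, Ai_eq_sum, Finset.sum_congr rfl fun k _ => card_residue i _ hi'.1 hi'.2,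
    Finset.sum_add_distrib]
  refine Nat.ModEq.add_right _ ?_
  unfold Nat.ModEq
  rw [Finset.sum_nat_mod]
  simp only [bit_add]
  norm_num
end

section
/- Let k ≥ 5 and let n = 2^k + w with w ∈ {3, 4}. Then Z(n) ≡ 1 (mod 8). -/
/-!
Write `n ! = 4 ^ a * m` with `m` odd; then `Z n = m`. The odd part of `(2 ^ k)!` is `3` modulo `8`
for `k ≥ 2`: from `(2N)! = 2 ^ N * N! * (1 * 3 * ⋯ * (2N - 1))`, doubling `N = 2 ^ k` multiplies the
odd part by a product of complete blocks of the four odd residues modulo `8`, and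
`1 * 3 * 5 * 7 ≡ 1`. Since the valuation of `(2 ^ k)!` is `2 ^ k - 1`, the factors
`2 ^ k + 1`, `2 ^ k + 2`, `2 ^ k + 3` make it even and multiply the odd part by `1 * 1 * 3`, giving
`9 ≡ 1`; the factor `2 ^ k + 4 = 4 * (2 ^ (k - 2) + 1)` changes neither conclusion once `k ≥ 5`.
-/

open Nat in
/-- `Z n = n! / 4^⌊γ/2⌋` where `γ` is the 2-adic valuation of `n!`,
so that `n! = 4^⌊γ/2⌋ * Z n`. -/
def Z (n : ℕ) : ℕ := n ! / 4 ^ (padicValNat 2 (n !) / 2)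

open Nat in
lemma Z_eq_of_factorial_eq {n a m : ℕ} (h : n ! = 4 ^ a * m) (hm : m % 8 = 1) : Z n = m := by
  have hv : padicValNat 2 (n !) = 2 * a := by
    have h4 : (4 : ℕ) ^ a = 2 ^ (2 * a) := by rw [pow_mul]; norm_num
    rw [h, h4, padicValNat.mul (by positivity) (by omega), padicValNat.prime_pow,
      padicValNat.eq_zero_of_not_dvd (by omega), add_zero]
  unfold Z
  rw [hv, h, Nat.mul_div_cancel_left a (by norm_num)]
  exact Nat.mul_div_cancel_left m (by positivity)

open Nat in
lemma factorial_two_mul_eq (N : ℕ) :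
    (2 * N)! = 2 ^ N * N ! * ∏ i ∈ Finset.range N, (2 * i + 1) := by
  induction N with
  | zero => simp
  | succ N ih =>
    rw [show 2 * (N + 1) = 2 * N + 1 + 1 by ring, Nat.factorial_succ, Nat.factorial_succ, ih,
      Finset.prod_range_succ, Nat.factorial_succ]
    ring

lemma prod_odd_mod_eight (M : ℕ) : (∏ i ∈ Finset.range (4 * M), (2 * i + 1)) % 8 = 1 := by
  induction M with
  | zero => simp
  | succ M ih =>
    rw [show 4 * (M + 1) = 4 * M + 1 + 1 + 1 + 1 by ring]
    simp only [Finset.prod_range_succ]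
    have h1 : (2 * (4 * M) + 1) % 8 = 1 := by omega
    have h2 : (2 * (4 * M + 1) + 1) % 8 = 3 := by omega
    have h3 : (2 * (4 * M + 1 + 1) + 1) % 8 = 5 := by omega
    have h4 : (2 * (4 * M + 1 + 1 + 1) + 1) % 8 = 7 := by omega
    rw [Nat.mul_mod, Nat.mul_mod _ (2 * (4 * M + 1 + 1) + 1), Nat.mul_mod _ (2 * (4 * M + 1) + 1),
      Nat.mul_mod _ (2 * (4 * M) + 1), ih, h1, h2, h3, h4]

open Nat in
/-- Both sides carry an extra factor `2` so that the exponent `2 ^ k - 1` needs no subtraction. -/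
lemma two_mul_factorial_two_pow (k : ℕ) :
    ∃ m, m % 8 = 3 ∧ 2 * (2 ^ (k + 2))! = 2 ^ 2 ^ (k + 2) * m := by
  induction k with
  | zero => exact ⟨3, rfl, by decide⟩
  | succ k ih =>
    obtain ⟨m, hm, h⟩ := ih
    refine ⟨m * ∏ i ∈ Finset.range (4 * 2 ^ k), (2 * i + 1), ?_, ?_⟩
    · rw [Nat.mul_mod, hm, prod_odd_mod_eight]
    · have e : 2 ^ (k + 2) = 4 * 2 ^ k := by ring
      rw [show 2 ^ (k + 1 + 2) = 2 * 2 ^ (k + 2) by ring, factorial_two_mul_eq]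
      rw [e] at h ⊢
      rw [two_mul (4 * 2 ^ k), pow_add]
      linear_combination (2 ^ (4 * 2 ^ k) * ∏ i ∈ Finset.range (4 * 2 ^ k), (2 * i + 1)) * h

theorem stmt_5 (k : ℕ) (hk : 5 ≤ k) (w : ℕ) (hw : w ∈ ({3, 4} : Set ℕ))
    (n : ℕ) (hn : n = 2 ^ k + w) : Z n % 8 = 1 := by
  obtain ⟨j, rfl⟩ := Nat.exists_eq_add_of_le hk
  obtain ⟨m, hm, h⟩ := two_mul_factorial_two_pow (3 + j)
  obtain ⟨t, ht⟩ : ∃ t, t = 2 ^ j := ⟨_, rfl⟩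
  have e : 2 ^ (5 + j) = 32 * t := by rw [ht]; ring
  have e' : 2 ^ (3 + j + 2) = 32 * t := by rw [ht]; ring
  rw [e'] at h
  rw [e] at hn
  have h4 : (2 : ℕ) ^ (32 * t) = 4 ^ (16 * t) := by
    rw [show 32 * t = 2 * (16 * t) by ring, pow_mul]; norm_num
  rw [h4] at h
  have h3 : Nat.factorial (32 * t + 3) =
      4 ^ (16 * t) * (m * (16 * t + 1) * (32 * t + 1) * (32 * t + 3)) := by
    rw [Nat.factorial_succ, Nat.factorial_succ, Nat.factorial_succ]
    linear_combination ((16 * t + 1) * (32 * t + 1) * (32 * t + 3)) * h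
  have a1 : (16 * t + 1) % 8 = 1 := by omega
  have a2 : (32 * t + 1) % 8 = 1 := by omega
  have a3 : (32 * t + 3) % 8 = 3 := by omega
  have a4 : (8 * t + 1) % 8 = 1 := by omega
  have m3 : (m * (16 * t + 1) * (32 * t + 1) * (32 * t + 3)) % 8 = 1 := by
    rw [Nat.mul_mod, Nat.mul_mod _ (32 * t + 1), Nat.mul_mod m, hm, a1, a2, a3]
  rcases hw with rfl | rfl
  · rw [hn, Z_eq_of_factorial_eq h3 m3, m3]
  · have h5 : Nat.factorial (32 * t + 4) = 4 ^ (16 * t + 1) *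
        (m * (16 * t + 1) * (32 * t + 1) * (32 * t + 3) * (8 * t + 1)) := by
      rw [Nat.factorial_succ, h3]
      ring
    have m4 : (m * (16 * t + 1) * (32 * t + 1) * (32 * t + 3) * (8 * t + 1)) % 8 = 1 := by
      rw [Nat.mul_mod, m3, a4]
    rw [hn, Z_eq_of_factorial_eq h5 m4, m4]
end

section
/- Let k ≥ 5 and let n = 2^k + w with w ∈ {0, 1, 6}. Then Z(n) ≡ 6 (mod 8). -/
open Nat in
/-- The product of the odd numbers below `8 * j`, here `4 * c + 1`, is `1` modulo `4`. -/
lemma factorial_eight_mul (j : ℕ) :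
    ∃ c, (8 * j)! = 2 ^ (4 * j) * (4 * j)! * (4 * c + 1) := by
  induction j with
  | zero => exact ⟨0, by simp⟩
  | succ j ih =>
    obtain ⟨c, hc⟩ := ih
    obtain ⟨d, hd⟩ : ∃ d, (4 * c + 1) * ((8 * j + 1) * (8 * j + 3) * (8 * j + 5) * (8 * j + 7))
        = 4 * d + 1 := by
      have h : ((4 * c + 1) * ((8 * j + 1) * (8 * j + 3) * (8 * j + 5) * (8 * j + 7))) % 4 = 1 := by
        have h1 : (4 * c + 1) % 4 = 1 := by omega
        have h2 : (8 * j + 1) % 4 = 1 := by omega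
        have h3 : (8 * j + 3) % 4 = 3 := by omega
        have h4 : (8 * j + 5) % 4 = 1 := by omega
        have h5 : (8 * j + 7) % 4 = 3 := by omega
        simp [Nat.mul_mod, h1, h2, h3, h4, h5]
      exact ⟨_, by rw [← Nat.div_add_mod (_ * _) 4, h]⟩
    refine ⟨d, ?_⟩
    rw [← hd]
    have e1 : (8 * (j + 1))! = (8 * j + 8) * ((8 * j + 7) * ((8 * j + 6) * ((8 * j + 5) *
        ((8 * j + 4) * ((8 * j + 3) * ((8 * j + 2) * ((8 * j + 1) * (8 * j)!))))))) := rfl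
    have e2 : (4 * (j + 1))! = (4 * j + 4) * ((4 * j + 3) * ((4 * j + 2) *
        ((4 * j + 1) * (4 * j)!))) := rfl
    rw [e1, e2, hc, show 4 * (j + 1) = 4 * j + 4 by ring, pow_add]
    ring

open Nat in
lemma factorial_two_pow (k : ℕ) :
    ∃ a b, (2 ^ (k + 2))! = 2 ^ (2 * a + 1) * (4 * b + 3) := by
  induction k with
  | zero => exact ⟨1, 0, by decide⟩
  | succ k ih =>
    obtain ⟨a, b, h⟩ := ih
    obtain ⟨c, hc⟩ := factorial_eight_mul (2 ^ k)
    rw [show 8 * 2 ^ k = 2 ^ (k + 1 + 2) by ring, show 4 * 2 ^ k = 2 ^ (k + 2) by ring, h] at hc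
    refine ⟨a + 2 * 2 ^ k, 4 * b * c + b + 3 * c, ?_⟩
    rw [hc, show 2 * (a + 2 * 2 ^ k) + 1 = 2 ^ (k + 2) + (2 * a + 1) by ring, pow_add]
    ring

open Nat in
lemma Z_mod_eight_of_factorial_eq {n a b : ℕ} (h : n ! = 2 ^ (2 * a + 1) * (4 * b + 3)) :
    Z n % 8 = 6 := by
  have hv : padicValNat 2 (n !) = 2 * a + 1 := by
    rw [h, padicValNat.mul (by positivity) (by omega), padicValNat.prime_pow,
      padicValNat.eq_zero_of_not_dvd (by omega), add_zero]
  have hZ : Z n = 2 * (4 * b + 3) := by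
    rw [Z, hv, show (2 * a + 1) / 2 = a by omega, h,
      show 2 ^ (2 * a + 1) * (4 * b + 3) = 4 ^ a * (2 * (4 * b + 3)) by
        rw [pow_succ, pow_mul]; norm_num; ring]
    exact Nat.mul_div_cancel_left _ (by positivity)
  omega

theorem stmt_9 (k : ℕ) (hk : 5 ≤ k) (w : ℕ) (hw : w ∈ ({0, 1, 6} : Set ℕ))
    (n : ℕ) (hn : n = 2 ^ k + w) : Z n % 8 = 6 := by
  obtain ⟨a, b, h⟩ := factorial_two_pow (k - 2)
  rw [show k - 2 + 2 = k by omega] at h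
  obtain ⟨M, hM⟩ : ∃ M, 2 ^ k = 16 * M := ⟨2 ^ (k - 4), by
    rw [show (16 : ℕ) = 2 ^ 4 by norm_num, ← pow_add]; congr 1; omega⟩
  rw [hM] at h hn
  simp only [Set.mem_insert_iff, Set.mem_singleton_iff] at hw
  subst hn
  rcases hw with rfl | rfl | rfl
  · exact Z_mod_eight_of_factorial_eq h
  · refine Z_mod_eight_of_factorial_eq (a := a) (b := 16 * M * b + b + 12 * M) ?_
    rw [Nat.factorial_succ, h]
    ring
  · -- The odd part of `(16M + 1) ⋯ (16M + 6)`, after removing `2` from `16M + 2` and `16M + 6`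
    -- and `4` from `16M + 4`.
    obtain ⟨d, hd⟩ : ∃ d, (4 * b + 3) * ((16 * M + 1) * (8 * M + 1) * (16 * M + 3) * (4 * M + 1) *
        (16 * M + 5) * (8 * M + 3)) = 4 * d + 3 := by
      have h : ((4 * b + 3) * ((16 * M + 1) * (8 * M + 1) * (16 * M + 3) * (4 * M + 1) *
          (16 * M + 5) * (8 * M + 3))) % 4 = 3 := by
        have h0 : (4 * b + 3) % 4 = 3 := by omega
        have h1 : (16 * M + 1) % 4 = 1 := by omega
        have h2 : (8 * M + 1) % 4 = 1 := by omega
        have h3 : (16 * M + 3) % 4 = 3 := by omega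
        have h4 : (4 * M + 1) % 4 = 1 := by omega
        have h5 : (16 * M + 5) % 4 = 1 := by omega
        have h6 : (8 * M + 3) % 4 = 3 := by omega
        simp [Nat.mul_mod, h0, h1, h2, h3, h4, h5, h6]
      exact ⟨_, by rw [← Nat.div_add_mod (_ * _) 4, h]⟩
    refine Z_mod_eight_of_factorial_eq (a := a + 2) (b := d) ?_
    rw [← hd]
    have e : (16 * M + 6).factorial = (16 * M + 6) * ((16 * M + 5) * ((16 * M + 4) *
        ((16 * M + 3) * ((16 * M + 2) * ((16 * M + 1) * (16 * M).factorial))))) := rfl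
    rw [e, h, show 2 * (a + 2) + 1 = 2 * a + 1 + 4 by ring, pow_add _ _ 4]
    ring
end

section
/- For every k ≥ 1, if n = (2/3)·(16^k − 1) (a natural number, with binary representation 1010…1010), then n! cannot be written as a sum of three squares of integers. -/
/-!
By the elementary half of Legendre's three-square theorem, it suffices to show that `n !` has the
form `4 ^ a * (8 * b + 7)`. This holds for `10 !`, and it passes from `n` to `16 * n + 10`, the
next number `1010…10`: halving `16 * n + 10` four times and collecting the odd factors at each stage
gives `(16 * n + 10) ! = 2 ^ (15 * n + 8) * P * n !` with `P` a product of four odd double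
factorials. These are periodic modulo `8`, because `1 * 3 * 5 * 7 ≡ 1 [MOD 8]`, and for
`n ≡ 2 [MOD 4]` the four factors are `1, 7, 1, 7` modulo `8`; also `15 * n + 8` is even.
-/

/-- The elementary half of Legendre's three-square theorem. -/
lemma not_sum_three_sq (m b : ℕ) (x y z : ℤ) :
    (4 : ℤ) ^ m * (8 * b + 7) ≠ x ^ 2 + y ^ 2 + z ^ 2 := by
  induction m generalizing x y z with
  | zero =>
    intro h
    have h8 := congrArg (Int.cast : ℤ → ZMod 8) h
    push_cast at h8
    have e : (8 : ZMod 8) = 0 := rfl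
    rw [e] at h8
    simp only [pow_zero, one_mul, zero_mul, zero_add] at h8
    generalize (x : ZMod 8) = u at h8
    generalize (y : ZMod 8) = v at h8
    generalize (z : ZMod 8) = w at h8
    revert u v w
    decide
  | succ m ih =>
    intro h
    have sq (t : ℤ) : (∃ s, t = 2 * s) ∨ ∃ q, t ^ 2 = 4 * q + 1 := by
      rcases Int.even_or_odd' t with ⟨s, rfl | rfl⟩
      · exact Or.inl ⟨s, rfl⟩
      · exact Or.inr ⟨s ^ 2 + s, by ring⟩
    have sq' (s : ℤ) : (2 * s) ^ 2 = 4 * s ^ 2 := by ring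
    rw [pow_succ, mul_comm ((4 : ℤ) ^ m) 4, mul_assoc] at h
    -- Squares are `0` or `1` modulo `4`, so all three must be even.
    rcases sq x with ⟨x', rfl⟩ | ⟨p, hp⟩ <;> rcases sq y with ⟨y', rfl⟩ | ⟨q, hq⟩ <;>
      rcases sq z with ⟨z', rfl⟩ | ⟨r, hr⟩ <;> simp only [sq', *] at h
    · exact ih x' y' z' (by linarith)
    all_goals omega

/-- The product of the first `m` odd numbers, `1 * 3 * ⋯ * (2 * m - 1)`. -/
def oddProd (m : ℕ) : ℕ := ∏ i ∈ Finset.range m, (2 * i + 1)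

lemma oddProd_succ (m : ℕ) : oddProd (m + 1) = oddProd m * (2 * m + 1) :=
  Finset.prod_range_succ _ _

open Nat in
lemma factorial_two_mul_eq_s10 (m : ℕ) : (2 * m)! = 2 ^ m * m ! * oddProd m := by
  induction m with
  | zero => simp [oddProd]
  | succ m ih =>
    rw [show 2 * (m + 1) = 2 * m + 1 + 1 by ring, Nat.factorial_succ, Nat.factorial_succ, ih,
      Nat.factorial_succ m, oddProd_succ]
    ring

open Nat in
lemma factorial_two_mul_add_one_eq (m : ℕ) :
    (2 * m + 1)! = 2 ^ m * m ! * oddProd (m + 1) := by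
  rw [Nat.factorial_succ, factorial_two_mul_eq_s10, oddProd_succ]
  ring

lemma oddProd_four_mul_add (t r : ℕ) : oddProd (4 * t + r) ≡ oddProd r [MOD 8] := by
  induction t with
  | zero => simp [Nat.ModEq]
  | succ t ih =>
    refine Nat.ModEq.trans ?_ ih
    rw [show 4 * (t + 1) + r = 4 * t + r + 1 + 1 + 1 + 1 by ring]
    simp only [oddProd_succ]
    generalize 4 * t + r = s
    rw [← ZMod.natCast_eq_natCast_iff]
    push_cast
    generalize (oddProd s : ZMod 8) = u
    generalize (s : ZMod 8) = v
    revert u v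
    decide

open Nat in
lemma factorial_step (n : ℕ) : (16 * n + 10)! = 2 ^ (15 * n + 8) *
    (oddProd (8 * n + 5) * oddProd (4 * n + 3) * oddProd (2 * n + 1) * oddProd (n + 1)) * n ! := by
  rw [show 16 * n + 10 = 2 * (8 * n + 5) by ring, factorial_two_mul_eq_s10,
    show (8 * n + 5)! = (2 * (4 * n + 2) + 1)! by ring_nf, factorial_two_mul_add_one_eq,
    show (4 * n + 2)! = (2 * (2 * n + 1))! by ring_nf, factorial_two_mul_eq_s10,
    factorial_two_mul_add_one_eq]
  ring

open Nat in
lemma factorial_form (k : ℕ) : ∃ t a b : ℕ,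
    2 * (16 ^ (k + 1) - 1) / 3 = 4 * t + 2 ∧ (4 * t + 2)! = 4 ^ a * (8 * b + 7) := by
  induction k with
  | zero => exact ⟨2, 4, 1771, by norm_num, by norm_num [Nat.factorial]⟩
  | succ k ih =>
    obtain ⟨t, a, b, hn, hf⟩ := ih
    have h3 : 16 ^ (k + 1) % 3 = 1 := by
      rw [Nat.pow_mod]; norm_num
    refine ⟨16 * t + 10, 30 * t + 19 + a, ?_⟩
    have hP : oddProd (8 * (4 * t + 2) + 5) * oddProd (4 * (4 * t + 2) + 3) *
        oddProd (2 * (4 * t + 2) + 1) * oddProd (4 * t + 2 + 1) ≡ 1 * 15 * 1 * 15 [MOD 8] := by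
      have h1 := oddProd_four_mul_add (8 * t + 5) 1
      have h2 := oddProd_four_mul_add (4 * t + 2) 3
      have h4 := oddProd_four_mul_add (2 * t + 1) 1
      have h5 := oddProd_four_mul_add t 3
      rw [show 8 * (4 * t + 2) + 5 = 4 * (8 * t + 5) + 1 by ring,
        show 2 * (4 * t + 2) + 1 = 4 * (2 * t + 1) + 1 by ring]
      have e1 : oddProd 1 = 1 := by decide
      have e3 : oddProd 3 = 15 := by decide
      rw [e1] at h1 h4
      rw [e3] at h2 h5
      exact ((h1.mul h2).mul h4).mul h5
    have hs := factorial_step (4 * t + 2)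
    generalize oddProd (8 * (4 * t + 2) + 5) * oddProd (4 * (4 * t + 2) + 3) *
        oddProd (2 * (4 * t + 2) + 1) * oddProd (4 * t + 2 + 1) = P at hP hs
    have hQ : P * (8 * b + 7) % 8 = 7 := by
      have : P * (8 * b + 7) ≡ (1 * 15 * 1 * 15) * 7 [MOD 8] :=
        hP.mul (by simp [Nat.ModEq])
      exact this
    refine ⟨P * (8 * b + 7) / 8, ?_, ?_⟩
    · rw [pow_succ]
      omega
    · rw [show 8 * (P * (8 * b + 7) / 8) + 7 = P * (8 * b + 7) by omega,
        show 4 * (16 * t + 10) + 2 = 16 * (4 * t + 2) + 10 by ring, hs, hf,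
        show 15 * (4 * t + 2) + 8 = 2 * (30 * t + 19) by ring, pow_mul, pow_add]
      norm_num
      ring

open Nat in
theorem stmt_10 (k : ℕ) (hk : 1 ≤ k) (n : ℕ) (hn : n = 2 * (16 ^ k - 1) / 3) :
    ¬ ∃ a b c : ℤ, (n ! : ℤ) = a ^ 2 + b ^ 2 + c ^ 2 := by
  obtain ⟨k, rfl⟩ := Nat.exists_eq_add_of_le' hk
  obtain ⟨t, a, b, h, hf⟩ := factorial_form k
  rintro ⟨x, y, z, hxyz⟩
  rw [hn, h, hf] at hxyz
  push_cast at hxyz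
  exact not_sum_three_sq a b x y z hxyz
end

section
/- Let n ∈ ℕ be divisible by 4 with n ≥ 4. If n! cannot be written as a sum of three squares of integers, then (2n)! cannot be written as a sum of three squares of integers. -/
/-!
Writing `(2n)! = 2 ^ n * n! * (2n - 1)‼` with `4 ∣ n`, the factor `2 ^ n` is a power of `4` and
`(2n - 1)‼` is a product of blocks of four consecutive odd numbers, each block being
`1 * 3 * 5 * 7 ≡ 1` modulo `8`. So if `n! = 4 ^ a * (8b + 7)`, then `(2n)!` has the same shape
(`factorial_double`) and is not a sum of three squares (`not_three_squares`).

What is left is Legendre's three-square theorem (`legendre_three_squares`): a natural number that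
is not a sum of three squares has the form `4 ^ a * (8b + 7)`. After removing factors `4`, let
`N ≡ 1, 2, 3, 5, 6` modulo `8` be a nonsquare. Dirichlet's theorem on primes in arithmetic
progressions and quadratic reciprocity provide a modulus `Q`, a prime `p ≡ 1` modulo `4` or twice
such a prime, with `Q ≡ -1` modulo `N` and `N` a square modulo `Q`. Under these congruences a
pigeonhole argument in the style of Thue gives `N * T ^ 2 = A ^ 2 + Q * B ^ 2` with `T ≠ 0`
(`exists_ternary_zero`). As `Q` is a sum of two squares, `N` is a sum of three rational squares,
and the Davenport–Cassels descent (`davenport_cassels`) makes them integers.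
-/

/-- Being a sum of three integer squares. -/
def IsSumThreeSq (N : ℤ) : Prop := ∃ a b c : ℤ, N = a ^ 2 + b ^ 2 + c ^ 2

/-! ### Numbers of the form `4 ^ a * (8 b + 7)` -/

lemma not_three_squares (a b : ℕ) : ¬ IsSumThreeSq ((4 : ℤ) ^ a * (8 * b + 7)) := by
  induction a with
  | zero =>
    rintro ⟨x, y, z, h⟩
    have h8 := congrArg (fun t : ℤ => (t : ZMod 8)) h
    push_cast at h8
    have h0 : (8 : ZMod 8) = 0 := by decide
    rw [h0] at h8
    generalize (x : ZMod 8) = x at h8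
    generalize (y : ZMod 8) = y at h8
    generalize (z : ZMod 8) = z at h8
    simp only [one_mul, zero_mul, zero_add] at h8
    revert x y z
    decide
  | succ a ih =>
    rintro ⟨x, y, z, h⟩
    have h4 := congrArg (fun t : ℤ => (t : ZMod 4)) h
    have h0 : (4 : ZMod 4) = 0 := by decide
    have key : ∀ x y z : ZMod 4, 0 = x ^ 2 + y ^ 2 + z ^ 2 →
        2 * x = 0 ∧ 2 * y = 0 ∧ 2 * z = 0 := by decide
    have h4' := key x y z (by
      push_cast at h4
      rw [pow_succ, h0] at h4
      simpa using h4)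
    have ev : ∀ t : ℤ, 2 * (t : ZMod 4) = 0 → ∃ s, t = 2 * s := by
      intro t ht
      have : ((2 * t : ℤ) : ZMod 4) = 0 := by push_cast; exact ht
      have := (ZMod.intCast_zmod_eq_zero_iff_dvd (2 * t) 4).1 this
      exact ⟨t / 2, by omega⟩
    obtain ⟨x, rfl⟩ := ev x h4'.1
    obtain ⟨y, rfl⟩ := ev y h4'.2.1
    obtain ⟨z, rfl⟩ := ev z h4'.2.2
    refine ih ⟨x, y, z, ?_⟩
    rw [pow_succ] at h
    linarith

open Nat in
/-- The odd part `(2n - 1)‼` of `(2n)! / n!` is `1` modulo `8` when `n = 4 * j`. -/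
lemma factorial_double (j : ℕ) :
    ∃ k : ℕ, (2 * (4 * j))! = 4 ^ (2 * j) * (4 * j)! * (8 * k + 1) := by
  induction j with
  | zero => exact ⟨0, by simp⟩
  | succ j ih =>
    obtain ⟨k, hk⟩ := ih
    obtain ⟨l, hl⟩ : ∃ l, (8 * j + 1) * (8 * j + 3) * (8 * j + 5) * (8 * j + 7) = 8 * l + 1 :=
      ⟨512 * j ^ 4 + 1024 * j ^ 3 + 688 * j ^ 2 + 176 * j + 13, by ring⟩
    refine ⟨8 * k * l + k + l, ?_⟩
    have e1 : 2 * (4 * (j + 1)) = 2 * (4 * j) + 8 := by ring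
    have e2 : 4 * (j + 1) = 4 * j + 4 := by ring
    have e3 : 8 * (8 * k * l + k + l) + 1 = (8 * k + 1) * (8 * l + 1) := by ring
    rw [e1, e2, e3, ← hl]
    simp only [Nat.factorial_succ, hk]
    ring

/-! ### The Davenport–Cassels descent -/

lemma exists_round (x T : ℤ) (hT : 0 < T) : ∃ X : ℤ, 4 * (T * X - x) ^ 2 ≤ T ^ 2 := by
  refine ⟨(2 * x + T) / (2 * T), ?_⟩
  have h1 := Int.emod_add_mul_ediv (2 * x + T) (2 * T)
  have h2 := Int.emod_nonneg (2 * x + T) (b := 2 * T) (by omega)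
  have h3 := Int.emod_lt_of_pos (2 * x + T) (b := 2 * T) (by omega)
  set X := (2 * x + T) / (2 * T)
  nlinarith

/-- A sum of three rational squares (written with the common denominator `T`) which is an integer
is a sum of three integer squares. The sphere of radius `√N` is met again by the line joining the
rational point `(x, y, z) / T` to a nearest integer point, at a point of smaller denominator. -/
lemma davenport_cassels (N : ℤ) : ∀ (T : ℕ), 0 < T → ∀ x y z : ℤ,
    N * (T : ℤ) ^ 2 = x ^ 2 + y ^ 2 + z ^ 2 → IsSumThreeSq N := by
  intro T
  induction T using Nat.strong_induction_on with
  | _ T ih =>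
  intro hT x y z h
  have hT' : (0 : ℤ) < T := by exact_mod_cast hT
  obtain ⟨X, hX⟩ := exists_round x T hT'
  obtain ⟨Y, hY⟩ := exists_round y T hT'
  obtain ⟨Z, hZ⟩ := exists_round z T hT'
  set a := X ^ 2 + Y ^ 2 + Z ^ 2 - N with ha
  set b := 2 * (N * T - (x * X + y * Y + z * Z)) with hb
  -- `a * T + b` is the new denominator: `T` times the squared distance of the two points.
  have hd : (T : ℤ) * (a * T + b) = (T * X - x) ^ 2 + (T * Y - y) ^ 2 + (T * Z - z) ^ 2 := by
    rw [ha, hb]; linear_combination h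
  have hn : N * (a * T + b) ^ 2 =
      (a * x + b * X) ^ 2 + (a * y + b * Y) ^ 2 + (a * z + b * Z) ^ 2 := by
    rw [ha, hb]; linear_combination a ^ 2 * h
  have q1 := sq_nonneg (T * X - x)
  have q2 := sq_nonneg (T * Y - y)
  have q3 := sq_nonneg (T * Z - z)
  have hlt : a * T + b < T := by
    by_contra hc
    have h1 : (T : ℤ) * T ≤ T * (a * T + b) := mul_le_mul_of_nonneg_left (by omega) hT'.le
    have h2 : (0 : ℤ) < T * T := mul_pos hT' hT'
    rw [← sq] at h1 h2
    linarith
  have hnn : 0 ≤ a * T + b := by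
    by_contra hc
    have : (T : ℤ) * (a * T + b) < 0 := mul_neg_of_pos_of_neg hT' (by omega)
    linarith
  rcases hnn.eq_or_lt with h0 | hpos
  · rw [← h0, mul_zero] at hd
    have h1 : (T * X - x) ^ 2 = 0 := by linarith
    have h2 : (T * Y - y) ^ 2 = 0 := by linarith
    have h3 : (T * Z - z) ^ 2 = 0 := by linarith
    have h1 : x = T * X := by have := pow_eq_zero_iff (two_ne_zero) |>.1 h1; omega
    have h2 : y = T * Y := by have := pow_eq_zero_iff (two_ne_zero) |>.1 h2; omega
    have h3 : z = T * Z := by have := pow_eq_zero_iff (two_ne_zero) |>.1 h3; omega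
    refine ⟨X, Y, Z, ?_⟩
    have : (T : ℤ) ^ 2 ≠ 0 := by positivity
    apply mul_right_cancel₀ this
    rw [h, h1, h2, h3]; ring
  · obtain ⟨T', hT'e⟩ := Int.eq_ofNat_of_zero_le hnn
    rw [hT'e] at hn hlt hpos
    exact ih T' (by exact_mod_cast hlt) (by exact_mod_cast hpos) _ _ _ hn

/-! ### A ternary form with a nontrivial zero -/

/-- If `N` and `Q` are nonsquares, `Q ≡ -1` modulo `N` and `N ≡ r ^ 2` modulo `Q`, then the form
`z ^ 2 + Q * s ^ 2 - N * t ^ 2` factors into linear forms modulo `N` and modulo `Q`. The pigeonhole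
principle gives a small nonzero `(z, s, t)` at which it is divisible by `N * Q`, so that it takes
the value `0` or `N * Q`; in the latter case one composes with `t ^ 2 + Q`. -/
lemma exists_ternary_zero (N Q : ℕ) (hN : ¬ IsSquare N) (hQ : ¬ IsSquare Q)
    (h1 : (N : ℤ) ∣ Q + 1) (r : ℤ) (h2 : (Q : ℤ) ∣ N - r ^ 2) :
    ∃ T A B : ℤ, T ≠ 0 ∧ (N : ℤ) * T ^ 2 = A ^ 2 + Q * B ^ 2 := by
  have hN0 : 0 < N := Nat.pos_of_ne_zero (by rintro rfl; exact hN ⟨0, rfl⟩)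
  have hQ0 : 0 < Q := Nat.pos_of_ne_zero (by rintro rfl; exact hQ ⟨0, rfl⟩)
  have : NeZero N := ⟨hN0.ne'⟩
  have : NeZero Q := ⟨hQ0.ne'⟩
  have hcop : IsCoprime (N : ℤ) Q := by
    obtain ⟨c, hc⟩ := h1
    exact ⟨c, -1, by linarith⟩
  let S : Finset (ℕ × ℕ × ℕ) := Finset.range (Nat.sqrt (N * Q) + 1) ×ˢ
    (Finset.range (Nat.sqrt N + 1) ×ˢ Finset.range (Nat.sqrt Q + 1))
  let f : ℕ × ℕ × ℕ → ZMod N × ZMod Q := fun v =>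
    (((v.1 : ℤ) - v.2.1 : ℤ), ((v.1 : ℤ) - r * v.2.2 : ℤ))
  have hcard : (Finset.univ : Finset (ZMod N × ZMod Q)).card < S.card := by
    simp only [S, Finset.card_product, Finset.card_range, Finset.card_univ, Fintype.card_prod,
      ZMod.card]
    have a1 := Nat.lt_succ_sqrt (N * Q)
    have a2 := Nat.lt_succ_sqrt N
    have a3 := Nat.lt_succ_sqrt Q
    simp only [Nat.succ_eq_add_one] at a1 a2 a3
    by_contra hc
    push Not at hc
    set u := Nat.sqrt (N * Q) + 1
    set v := Nat.sqrt N + 1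
    set w := Nat.sqrt Q + 1
    have a4 : N * Q < (v * v) * (w * w) := Nat.mul_lt_mul'' a2 a3
    have a5 : (N * Q) * (N * Q) < (u * u) * ((v * v) * (w * w)) := Nat.mul_lt_mul'' a1 a4
    have a6 : (u * (v * w)) * (u * (v * w)) ≤ (N * Q) * (N * Q) := Nat.mul_le_mul hc hc
    nlinarith
  obtain ⟨⟨z₁, s₁, t₁⟩, hm1, ⟨z₂, s₂, t₂⟩, hm2, hne, hf⟩ :=
    Finset.exists_ne_map_eq_of_card_lt_of_maps_to hcard (f := f) (fun _ _ => by simp)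
  simp only [S, Finset.mem_product, Finset.mem_range] at hm1 hm2
  simp only [f, Prod.mk.injEq, ZMod.intCast_eq_intCast_iff_dvd_sub] at hf
  obtain ⟨hfN, hfQ⟩ := hf
  have bound : ∀ (m a b : ℕ), a < Nat.sqrt m + 1 → b < Nat.sqrt m + 1 →
      ((a : ℤ) - b) ^ 2 ≤ m := by
    intro m a b hha hhb
    have hs : (Nat.sqrt m : ℤ) * Nat.sqrt m ≤ m := by exact_mod_cast Nat.sqrt_le m
    have : |(a : ℤ) - b| ≤ |(Nat.sqrt m : ℤ)| := by
      rw [abs_of_nonneg (a := (Nat.sqrt m : ℤ)) (by positivity), abs_le]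
      constructor <;> omega
    have := sq_le_sq.2 this
    nlinarith
  have bz := bound _ _ _ hm2.1 hm1.1
  have bs := bound _ _ _ hm2.2.1 hm1.2.1
  have bt := bound _ _ _ hm2.2.2 hm1.2.2
  have hnz : ¬ (((z₂ : ℤ) - z₁ = 0) ∧ ((s₂ : ℤ) - s₁ = 0) ∧ ((t₂ : ℤ) - t₁ = 0)) := by
    rintro ⟨c1, c2, c3⟩
    apply hne
    simp only [Prod.mk.injEq]
    omega
  have hfN : (N : ℤ) ∣ ((z₂ : ℤ) - z₁) - (s₂ - s₁) := by
    convert hfN using 1; ring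
  have hfQ : (Q : ℤ) ∣ ((z₂ : ℤ) - z₁) - r * (t₂ - t₁) := by
    convert hfQ using 1; ring
  generalize (z₂ : ℤ) - z₁ = z at *
  generalize (s₂ : ℤ) - s₁ = s at *
  generalize (t₂ : ℤ) - t₁ = t at *
  push_cast at bz
  have hNz : (0 : ℤ) < N := by exact_mod_cast hN0
  have hQz : (0 : ℤ) < Q := by exact_mod_cast hQ0
  have sq_ne : ∀ (m : ℕ) (a : ℤ), ¬ IsSquare m → a ^ 2 ≠ m := by
    intro m a hm he
    apply hm
    refine ⟨a.natAbs, ?_⟩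
    zify
    rw [← he, ← sq, sq_abs]
  have bs' : s ^ 2 < N := lt_of_le_of_ne bs (sq_ne N s hN)
  have bt' : t ^ 2 < Q := lt_of_le_of_ne bt (sq_ne Q t hQ)
  have hdiv : (N : ℤ) * Q ∣ z ^ 2 + Q * s ^ 2 - N * t ^ 2 := by
    apply hcop.mul_dvd
    · have e : z ^ 2 + Q * s ^ 2 - N * t ^ 2 =
          (z - s) * (z + s) + (Q + 1) * s ^ 2 - N * t ^ 2 := by ring
      rw [e]
      exact dvd_sub (dvd_add (hfN.mul_right _) (h1.mul_right _)) (dvd_mul_right _ _)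
    · have e : z ^ 2 + Q * s ^ 2 - N * t ^ 2 =
          (z - r * t) * (z + r * t) + Q * s ^ 2 - (N - r ^ 2) * t ^ 2 := by ring
      rw [e]
      exact dvd_sub (dvd_add (hfQ.mul_right _) (dvd_mul_right _ _)) (h2.mul_right _)
  obtain ⟨c, hc⟩ := hdiv
  have hNQ : (0 : ℤ) < N * Q := by positivity
  have u1 : (Q : ℤ) * s ^ 2 < Q * N := mul_lt_mul_of_pos_left bs' hQz
  have u2 : (N : ℤ) * t ^ 2 < N * Q := mul_lt_mul_of_pos_left bt' hNz
  have u3 : 0 ≤ (Q : ℤ) * s ^ 2 := by positivity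
  have u4 : 0 ≤ (N : ℤ) * t ^ 2 := by positivity
  have c1 : c < 2 := by
    by_contra hcc
    nlinarith
  have c2 : -1 < c := by
    by_contra hcc
    nlinarith [sq_nonneg z]
  obtain rfl | rfl : c = 0 ∨ c = 1 := by omega
  · refine ⟨t, z, s, ?_, by linarith⟩
    rintro rfl
    have hz : z ^ 2 = 0 := by nlinarith [sq_nonneg z]
    have hs : (Q : ℤ) * s ^ 2 = 0 := by nlinarith [sq_nonneg z]
    apply hnz
    refine ⟨by simpa using hz, ?_, rfl⟩
    rcases mul_eq_zero.1 hs with h | h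
    · omega
    · simpa using h
  · refine ⟨t ^ 2 + Q, z * t + Q * s, z - s * t, by positivity, ?_⟩
    linear_combination (-(t ^ 2 + (Q : ℤ))) * hc

/-! ### Legendre's theorem -/

lemma isSumThreeSq_of_aux (N Q : ℕ) (hN : ¬ IsSquare N) (hQ : ¬ IsSquare Q)
    (h1 : (N : ℤ) ∣ Q + 1) (r : ℤ) (h2 : (Q : ℤ) ∣ N - r ^ 2)
    (h3 : ∃ u v : ℤ, (Q : ℤ) = u ^ 2 + v ^ 2) : IsSumThreeSq N := by
  obtain ⟨T, A, B, hT, h⟩ := exists_ternary_zero N Q hN hQ h1 r h2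
  obtain ⟨u, v, huv⟩ := h3
  refine davenport_cassels N T.natAbs (Int.natAbs_pos.2 hT) A (u * B) (v * B) ?_
  rw [Int.natCast_natAbs, sq_abs, h, huv]
  ring

lemma prime_two_squares (p : ℕ) (hp : p.Prime) (h4 : p % 4 = 1) :
    ∃ u v : ℤ, (p : ℤ) = u ^ 2 + v ^ 2 := by
  have := Fact.mk hp
  obtain ⟨a, b, h⟩ := Nat.Prime.sq_add_sq (p := p) (by omega)
  exact ⟨a, b, by exact_mod_cast h.symm⟩

open scoped NumberTheorySymbols

lemma exists_sqrt_of_jacobi (N p : ℕ) (hp : p.Prime) (h : J((N : ℤ) | p) = 1) :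
    ∃ r : ℤ, (p : ℤ) ∣ N - r ^ 2 := by
  have := Fact.mk hp
  obtain ⟨y, hy⟩ := ZMod.isSquare_of_jacobiSym_eq_one h
  obtain ⟨r, rfl⟩ := ZMod.intCast_surjective y
  refine ⟨r, ?_⟩
  rw [← ZMod.intCast_zmod_eq_zero_iff_dvd]
  push_cast
  rw [sub_eq_zero, sq]
  exact_mod_cast hy

lemma jacobi_congr {a b : ℤ} {n : ℕ} (h : (n : ℤ) ∣ a - b) : J(a | n) = J(b | n) :=
  jacobiSym.mod_left' (Int.emod_eq_emod_iff_emod_sub_eq_zero.2 (Int.emod_eq_zero_of_dvd h))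

lemma case_one_mod_four (N : ℕ) (hN : ¬ IsSquare N) (h : N % 4 = 1) : IsSumThreeSq N := by
  -- `p ≡ 2 * N - 1` modulo `4 * N` means `p ≡ 1` modulo `4` and `p ≡ -1` modulo `N`.
  obtain ⟨p, -, hp, hpm⟩ := Nat.forall_exists_prime_gt_and_zmodEq 0 (q := 4 * N)
    (a := 2 * N - 1) (by omega) (by
      push_cast
      exact IsCoprime.mul_right ⟨1, -(N / 2 : ℤ), by omega⟩ ⟨-1, 2, by ring⟩)
  obtain ⟨k, hk⟩ := hpm.dvd
  push_cast at hk
  have hdvd : (N : ℤ) ∣ p + 1 := ⟨2 - 4 * k, by linarith⟩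
  have hp4 : p % 4 = 1 := by
    have : (p : ℤ) = 4 * (- (N * k)) + 2 * N - 1 := by linarith
    omega
  have hodd : Odd N := Nat.odd_iff.2 (by omega)
  have hJ : J((N : ℤ) | p) = 1 := by
    rw [jacobiSym.quadratic_reciprocity_one_mod_four' hodd hp4,
      jacobi_congr (b := -1) (by simpa using hdvd), jacobiSym.at_neg_one hodd,
      ZMod.χ₄_nat_one_mod_four h]
  obtain ⟨r, hr⟩ := exists_sqrt_of_jacobi N p hp hJ
  exact isSumThreeSq_of_aux N p hN hp.prime.not_isSquare hdvd r hr (prime_two_squares p hp hp4)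

lemma case_two_mod_four (N : ℕ) (hN : ¬ IsSquare N) (h : N % 4 = 2) : IsSumThreeSq N := by
  obtain ⟨M, rfl⟩ : ∃ M, N = 2 * M := ⟨N / 2, by omega⟩
  have hM : M % 2 = 1 := by omega
  -- `p ≡ 2 * M - 1` modulo `8 * M` gives `p ≡ -1` modulo `2 * M`, and `p ≡ 1` or `5` modulo `8`
  -- according to whether `M ≡ 1` or `3` modulo `4`, so that `J(2 | p) = J(-1 | M)`.
  obtain ⟨p, -, hp, hpm⟩ := Nat.forall_exists_prime_gt_and_zmodEq 0 (q := 8 * M)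
    (a := 2 * M - 1) (by omega) (by
      push_cast
      refine IsCoprime.mul_right ?_ ⟨-1, 2, by ring⟩
      have : IsCoprime (2 * (M : ℤ) - 1) 2 := ⟨-1, M, by ring⟩
      have := this.pow_right (n := 3)
      norm_num at this
      exact this)
  obtain ⟨k, hk⟩ := hpm.dvd
  push_cast at hk
  have hpe : (p : ℤ) = 8 * (- (M * k)) + 2 * M - 1 := by linarith
  have hp4 : p % 4 = 1 := by omega
  have hodd : Odd M := Nat.odd_iff.2 hM
  have hpodd : Odd p := Nat.odd_iff.2 (by omega)
  have hdvd : (M : ℤ) ∣ p + 1 := ⟨2 - 8 * k, by linarith⟩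
  have hJ : J(((2 * M : ℕ) : ℤ) | p) = 1 := by
    push_cast
    rw [jacobiSym.mul_left, jacobiSym.at_two hpodd,
      jacobiSym.quadratic_reciprocity_one_mod_four' hodd hp4,
      jacobi_congr (b := -1) (by simpa using hdvd), jacobiSym.at_neg_one hodd,
      ZMod.χ₄_nat_eq_if_mod_four, ZMod.χ₈_nat_eq_if_mod_eight]
    split_ifs <;> first | rfl | omega
  obtain ⟨r, hr⟩ := exists_sqrt_of_jacobi _ p hp hJ
  exact isSumThreeSq_of_aux _ p hN hp.prime.not_isSquare
    ⟨1 - 4 * k, by push_cast; linarith⟩ r hr (prime_two_squares p hp hp4)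

lemma case_three_mod_eight (N : ℕ) (hN : ¬ IsSquare N) (h : N % 8 = 3) : IsSumThreeSq N := by
  obtain ⟨b, rfl⟩ : ∃ b, N = 8 * b + 3 := ⟨N / 8, by omega⟩
  -- `p ≡ 4 * b + 1 = (N - 1) / 2` modulo `4 * N` means `p ≡ 1` modulo `4` and `2 * p ≡ -1`
  -- modulo `N`.
  obtain ⟨p, -, hp, hpm⟩ := Nat.forall_exists_prime_gt_and_zmodEq 0 (q := 4 * (8 * b + 3))
    (a := 4 * b + 1) (by omega) (by
      push_cast
      exact IsCoprime.mul_right ⟨1, -b, by ring⟩ ⟨-2, 1, by ring⟩)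
  obtain ⟨k, hk⟩ := hpm.dvd
  push_cast at hk
  have hpe : (p : ℤ) = 4 * (- ((8 * b + 3) * k)) + 4 * b + 1 := by linarith
  have hp4 : p % 4 = 1 := by omega
  have hdvd : ((8 * b + 3 : ℕ) : ℤ) ∣ 2 * p + 1 := ⟨1 - 8 * k, by push_cast; linarith⟩
  have hodd : Odd (8 * b + 3) := Nat.odd_iff.2 (by omega)
  have hJ : J(((8 * b + 3 : ℕ) : ℤ) | p) = 1 := by
    rw [jacobiSym.quadratic_reciprocity_one_mod_four' hodd hp4]
    have e1 : J(2 * (p : ℤ) | (8 * b + 3)) = J(-1 | (8 * b + 3)) :=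
      jacobi_congr (by simpa using hdvd)
    rw [jacobiSym.mul_left, jacobiSym.at_neg_one hodd, jacobiSym.at_two hodd,
      ZMod.χ₄_nat_three_mod_four (by omega), ZMod.χ₈_nat_eq_if_mod_eight,
      if_neg (by omega), if_neg (by omega)] at e1
    linarith
  obtain ⟨r, hr⟩ := exists_sqrt_of_jacobi _ p hp hJ
  -- An odd square root of `N` modulo `p` is one modulo `2 * p`.
  obtain ⟨r', hr', hro⟩ : ∃ r' : ℤ, (p : ℤ) ∣ ((8 * b + 3 : ℕ) : ℤ) - r' ^ 2 ∧ r' % 2 = 1 := by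
    rcases Int.emod_two_eq_zero_or_one r with h0 | h0
    · refine ⟨r + p, ?_, by omega⟩
      have e : ((8 * b + 3 : ℕ) : ℤ) - (r + p) ^ 2 =
        (((8 * b + 3 : ℕ) : ℤ) - r ^ 2) - p * (2 * r + p) := by ring
      rw [e]
      exact dvd_sub hr (dvd_mul_right _ _)
    · exact ⟨r, hr, h0⟩
  have h2 : (((2 * p : ℕ)) : ℤ) ∣ ((8 * b + 3 : ℕ) : ℤ) - r' ^ 2 := by
    push_cast at hr' ⊢
    refine IsCoprime.mul_dvd ⟨-(p / 2 : ℤ), 1, by omega⟩ ?_ hr'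
    obtain ⟨m, rfl⟩ : ∃ m, r' = 2 * m + 1 := ⟨r' / 2, by omega⟩
    exact ⟨4 * b + 1 - 2 * m ^ 2 - 2 * m, by ring⟩
  obtain ⟨u, v, huv⟩ := prime_two_squares p hp hp4
  refine isSumThreeSq_of_aux _ (2 * p) hN ?_ (by push_cast at hdvd ⊢; exact hdvd) r' h2
    ⟨u + v, u - v, by push_cast; rw [huv]; ring⟩
  rintro ⟨c, hc⟩
  rcases Nat.even_or_odd' c with ⟨d, rfl | rfl⟩
  · ring_nf at hc
    omega
  · ring_nf at hc
    omega

/-- **Legendre's three-square theorem**, the direction that produces representations. -/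
theorem legendre_three_squares (N : ℕ) (hN : 0 < N) (h : ¬ IsSumThreeSq N) :
    ∃ a b : ℕ, N = 4 ^ a * (8 * b + 7) := by
  induction N using Nat.strong_induction_on with
  | _ N ih =>
  have hsq : ¬ IsSquare N := by
    rintro ⟨c, rfl⟩
    exact h ⟨c, 0, 0, by push_cast; ring⟩
  have n1 : N % 4 ≠ 1 := fun h' => h (case_one_mod_four N hsq h')
  have n2 : N % 4 ≠ 2 := fun h' => h (case_two_mod_four N hsq h')
  have n3 : N % 8 ≠ 3 := fun h' => h (case_three_mod_eight N hsq h')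
  by_cases h0 : N % 4 = 0
  · obtain ⟨M, rfl⟩ : ∃ M, N = 4 * M := ⟨N / 4, by omega⟩
    obtain ⟨a, b, hab⟩ := ih M (by omega) (by omega) (by
      rintro ⟨x, y, z, hxyz⟩
      exact h ⟨2 * x, 2 * y, 2 * z, by push_cast; rw [hxyz]; ring⟩)
    exact ⟨a + 1, b, by rw [hab]; ring⟩
  · exact ⟨0, N / 8, by omega⟩

open Nat in
theorem stmt_12 (n : ℕ) (h4 : 4 ∣ n) (hn : 4 ≤ n)
    (h : ¬ ∃ a b c : ℤ, (n ! : ℤ) = a ^ 2 + b ^ 2 + c ^ 2) :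
    ¬ ∃ a b c : ℤ, ((2 * n)! : ℤ) = a ^ 2 + b ^ 2 + c ^ 2 := by
  obtain ⟨j, rfl⟩ := h4
  obtain ⟨a, b, hab⟩ := legendre_three_squares _ (Nat.factorial_pos (4 * j)) h
  obtain ⟨k, hk⟩ := factorial_double j
  have e : (((2 * (4 * j))! : ℕ) : ℤ) =
      4 ^ (2 * j + a) * (8 * ((8 * b * k + b + 7 * k : ℕ) : ℤ) + 7) := by
    rw [hk, hab]; push_cast; ring
  rw [e]
  exact not_three_squares _ _
end

section
/- Let n ∈ ℕ be divisible by 4 with n ≥ 4. Then Z(n) ≡ Z(2n) (mod 8). -/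
open Nat in
/-- The factor `D` is the product of the odd numbers below `8m`. -/
lemma factorial_eight_mul_s13 (m : ℕ) :
    ∃ D : ℕ, D ≡ 1 [MOD 8] ∧ (8 * m)! = 4 ^ (2 * m) * ((4 * m)! * D) := by
  induction m with
  | zero => exact ⟨1, rfl, rfl⟩
  | succ m ih =>
    obtain ⟨D, hD, h⟩ := ih
    refine ⟨D * ((8 * m + 1) * (8 * m + 3) * (8 * m + 5) * (8 * m + 7)), ?_, ?_⟩
    · have key (a : ℕ) : 8 * m + a ≡ a [MOD 8] := by simp [Nat.ModEq]
      exact hD.mul ((((key 1).mul (key 3)).mul (key 5)).mul (key 7))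
    · rw [show 8 * (m + 1) = 8 * m + 8 by ring, show 4 * (m + 1) = 4 * m + 4 by ring,
        show 2 * (m + 1) = 2 * m + 2 by ring]
      simp only [Nat.factorial_succ, h]
      ring

theorem stmt_13 (n : ℕ) (h4 : 4 ∣ n) (hn : 4 ≤ n) :
    Z n ≡ Z (2 * n) [MOD 8] := by
  obtain ⟨m, rfl⟩ := h4
  obtain ⟨D, hD, h⟩ := factorial_eight_mul_s13 m
  have hf : (4 * m).factorial ≠ 0 := Nat.factorial_ne_zero _
  have hodd : ¬ 2 ∣ D := by
    have : D % 8 = 1 := hD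
    omega
  have hD0 : D ≠ 0 := by
    rintro rfl
    exact hodd (dvd_zero 2)
  have hv : padicValNat 2 (8 * m).factorial = 2 * (2 * m) + padicValNat 2 (4 * m).factorial := by
    rw [h, padicValNat.mul (by positivity) (mul_ne_zero hf hD0), padicValNat.mul hf hD0,
      padicValNat.eq_zero_of_not_dvd hodd, show 4 ^ (2 * m) = 2 ^ (2 * (2 * m)) by
        rw [pow_mul 2 2]; norm_num, padicValNat.prime_pow, add_zero]
  have hdvd : 4 ^ (padicValNat 2 (4 * m).factorial / 2) ∣ (4 * m).factorial := by
    rw [show 4 = 2 ^ 2 by rfl, ← pow_mul]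
    exact (pow_dvd_pow 2 (Nat.mul_div_le _ 2)).trans pow_padicValNat_dvd
  have hZ : Z (2 * (4 * m)) = Z (4 * m) * D := by
    unfold Z
    rw [show 2 * (4 * m) = 8 * m by ring, hv, Nat.mul_add_div two_pos, pow_add, h,
      Nat.mul_div_mul_left _ _ (by positivity), Nat.div_mul_right_comm hdvd]
  rw [hZ]
  simpa using (hD.mul_left (Z (4 * m))).symm
end

section
/- For every natural number n ≥ 7 there exists a prime p with p ≡ 3 (mod 4) and n/2 < p ≤ n (equivalently, n < 2p and p ≤ n). -/
/-!
Chebyshev's method in the residue class `3` modulo `4`. For `r = 1, 3` let `S r N` (`logSum`) be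
the sum of `log k` over `k ≤ N`, `k ≡ r (mod 4)`. Two facts about it are used.

* `logSum_div`: since `log = Λ * 1`, `S r (n / m)` is a sum over `d ≤ n` of `Λ d`, weighted by
  the number of `j ≤ n / (d m)` with `d j ≡ r (mod 4)`.
* `logSum_le`, `le_logSum`: `S r N = (N / 4) (log N - 1) + O(log N)`, for both values of `r`.

Consider `S 3 n - S 3 (n/2) - S 1 (n/3) - S 3 (n/4) + S 1 (n/12)`. As
`1 - 1/2 - 1/3 - 1/4 + 1/12 = 0`, the terms in `n log n` cancel, and the combination is
`n (5/24 log 2 + 1/16 log 3) + O(log n)`. On the other hand, its expansion in `Λ d` has coefficients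
depending only on `d` modulo `4` and, with period `48`, on `t = n / d`. They are at most `1`, and
the positive ones occur only for `t ≥ 10`, or for `t = 1`, `d ≡ 3 (mod 4)`, that is
`n / 2 < d ≤ n` (`weight_le`). The first kind contributes at most `ψ (n / 10)`, which is
`n (log 4) / 10 + O(√n log n)` at most; if no prime `p ≡ 3 (mod 4)` lies in `(n / 2, n]`, the second
kind involves only proper prime powers and contributes at most `ψ n - θ n = O(√n log n)`.
Since `5/24 > 1/5 = 2/10`, this is a contradiction for `n ≥ 10 ^ 6`. Smaller `n` are covered by a
chain of primes `≡ 3 (mod 4)`, each at most twice its predecessor.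
-/

/-- `logSum r N` is the sum of `log k` over `1 ≤ k ≤ N` with `k ≡ r (mod 4)`; here `r < 4`. -/
noncomputable def logSum (r N : ℕ) : ℝ :=
  ∑ k ∈ Finset.Ioc 0 N, if k % 4 = r then Real.log k else 0

/-- The number of `1 ≤ j ≤ N` with `d * j ≡ r (mod 4)`. -/
def mulCount (r d N : ℕ) : ℕ :=
  ((Finset.Ioc 0 N).filter fun j => (d * j) % 4 = r).card

/-! ### Expansion of `logSum` over prime powers -/

/-- Chebyshev's identity: `log = Λ * 1`, summed over a residue class. -/
lemma logSum_eq_sum_vonMangoldt (r n : ℕ) :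
    logSum r n = ∑ d ∈ Finset.Ioc 0 n,
      ArithmeticFunction.vonMangoldt d * mulCount r d (n / d) := by
  have h1 : logSum r n = ∑ k ∈ Finset.Ioc 0 n, ∑ d ∈ k.divisors,
      if k % 4 = r then ArithmeticFunction.vonMangoldt d else 0 := by
    refine Finset.sum_congr rfl fun k _ => ?_
    split_ifs with h
    · exact ArithmeticFunction.vonMangoldt_sum.symm
    · simp
  have h2 : ∑ d ∈ Finset.Ioc 0 n,
      ArithmeticFunction.vonMangoldt d * (mulCount r d (n / d) : ℝ) =
      ∑ d ∈ Finset.Ioc 0 n, ∑ j ∈ Finset.Ioc 0 (n / d),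
        if (d * j) % 4 = r then ArithmeticFunction.vonMangoldt d else 0 := by
    refine Finset.sum_congr rfl fun d _ => ?_
    rw [← Finset.sum_filter, Finset.sum_const, nsmul_eq_mul, mul_comm, mulCount]
  rw [h1, h2, Finset.sum_sigma', Finset.sum_sigma']
  refine Finset.sum_bij' (fun x _ => ⟨x.2, x.1 / x.2⟩) (fun x _ => ⟨x.1 * x.2, x.1⟩) ?_ ?_ ?_ ?_ ?_
  · rintro ⟨k, d⟩ h
    simp only [Finset.mem_sigma, Finset.mem_Ioc, Nat.mem_divisors] at h ⊢
    obtain ⟨⟨hk, hkn⟩, hd, -⟩ := h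
    have hd0 := Nat.pos_of_dvd_of_pos hd hk
    have hdk := Nat.le_of_dvd hk hd
    exact ⟨⟨hd0, hdk.trans hkn⟩, Nat.div_pos hdk hd0, Nat.div_le_div_right hkn⟩
  · rintro ⟨d, j⟩ h
    simp only [Finset.mem_sigma, Finset.mem_Ioc, Nat.mem_divisors] at h ⊢
    obtain ⟨⟨hd, hdn⟩, hj, hjn⟩ := h
    have := (Nat.le_div_iff_mul_le hd).1 hjn
    have h0 : 0 < d * j := Nat.mul_pos hd hj
    exact ⟨⟨h0, by rwa [mul_comm]⟩, Dvd.intro _ rfl, h0.ne'⟩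
  · rintro ⟨k, d⟩ h
    simp only [Finset.mem_sigma, Nat.mem_divisors] at h
    have := Nat.mul_div_cancel' h.2.1
    simp [this]
  · rintro ⟨d, j⟩ h
    simp only [Finset.mem_sigma, Finset.mem_Ioc] at h
    simp [Nat.mul_div_cancel_left _ h.1.1]
  · rintro ⟨k, d⟩ h
    simp only [Finset.mem_sigma, Nat.mem_divisors] at h
    simp [Nat.mul_div_cancel' h.2.1]

/-- The expansion of `logSum r (n / m)`, over a range of `d` that does not depend on `m`. -/
lemma logSum_div (r n m : ℕ) :
    logSum r (n / m) = ∑ d ∈ Finset.Ioc 0 n,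
      ArithmeticFunction.vonMangoldt d * mulCount r d (n / d / m) := by
  rw [logSum_eq_sum_vonMangoldt]
  simp_rw [Nat.div_div_eq_div_mul, mul_comm m, ← Nat.div_div_eq_div_mul]
  refine Finset.sum_subset (Finset.Ioc_subset_Ioc_right (Nat.div_le_self n m)) ?_
  intro d hd hd'
  simp only [Finset.mem_Ioc, not_and, not_le] at hd hd'
  have : n / d / m = 0 := by
    rw [Nat.div_div_eq_div_mul, mul_comm, ← Nat.div_div_eq_div_mul]
    exact Nat.div_eq_of_lt (hd' hd.1)
  simp [this, mulCount]

lemma mulCount_zero (r d : ℕ) : mulCount r d 0 = 0 := by simp [mulCount]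

lemma mulCount_succ (r d N : ℕ) :
    mulCount r d (N + 1) = mulCount r d N + if (d * (N + 1)) % 4 = r then 1 else 0 := by
  rw [mulCount, mulCount, ← Finset.insert_Ioc_right_eq_Ioc_add_one (Nat.zero_le N),
    Finset.filter_insert]
  split_ifs <;> simp

lemma mulCount_three_of_three {d : ℕ} (hd : d % 4 = 3) (N : ℕ) :
    mulCount 3 d N = (N + 3) / 4 := by
  induction N with
  | zero => simp [mulCount_zero]
  | succ N ih =>
    have h : d * (N + 1) % 4 = 3 * (N + 1) % 4 :=
      (show d ≡ 3 [MOD 4] from hd).mul_right (N + 1)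
    have h4 : N % 4 = 0 ∨ N % 4 = 1 ∨ N % 4 = 2 ∨ N % 4 = 3 := by omega
    rw [mulCount_succ, ih, h]
    split_ifs <;> rcases h4 with h4 | h4 | h4 | h4 <;> omega

lemma mulCount_three_of_one {d : ℕ} (hd : d % 4 = 1) (N : ℕ) :
    mulCount 3 d N = (N + 1) / 4 := by
  induction N with
  | zero => simp [mulCount_zero]
  | succ N ih => rw [mulCount_succ, ih, Nat.mul_mod, hd]; split_ifs <;> omega

lemma mulCount_one_of_three {d : ℕ} (hd : d % 4 = 3) (N : ℕ) :
    mulCount 1 d N = (N + 1) / 4 := by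
  induction N with
  | zero => simp [mulCount_zero]
  | succ N ih =>
    have h : d * (N + 1) % 4 = 3 * (N + 1) % 4 :=
      (show d ≡ 3 [MOD 4] from hd).mul_right (N + 1)
    have h4 : N % 4 = 0 ∨ N % 4 = 1 ∨ N % 4 = 2 ∨ N % 4 = 3 := by omega
    rw [mulCount_succ, ih, h]
    split_ifs <;> rcases h4 with h4 | h4 | h4 | h4 <;> omega

lemma mulCount_one_of_one {d : ℕ} (hd : d % 4 = 1) (N : ℕ) :
    mulCount 1 d N = (N + 3) / 4 := by
  induction N with
  | zero => simp [mulCount_zero]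
  | succ N ih => rw [mulCount_succ, ih, Nat.mul_mod, hd]; split_ifs <;> omega

lemma mulCount_of_even {r d : ℕ} (hr : r % 2 = 1) (hd : d % 2 = 0) (N : ℕ) :
    mulCount r d N = 0 := by
  rw [mulCount, Finset.card_eq_zero, Finset.filter_eq_empty_iff]
  intro j _ h
  have : (d * j) % 2 = 0 := by rw [Nat.mul_mod, hd]; simp
  omega

lemma weight_three_le {t : ℕ} (ht : t ≠ 0) :
    (t + 3) / 4 + (t / 12 + 1) / 4 ≤
      (t / 2 + 3) / 4 + (t / 3 + 1) / 4 + (t / 4 + 3) / 4 +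
        ((if t = 1 then 1 else 0) + if 10 ≤ t then 1 else 0) := by
  obtain ⟨q, s, hs, rfl⟩ : ∃ q s, s < 48 ∧ t = 48 * q + s :=
    ⟨t / 48, t % 48, Nat.mod_lt _ (by norm_num), by omega⟩
  interval_cases s <;> split_ifs <;> omega

lemma weight_one_le (t : ℕ) :
    (t + 1) / 4 + (t / 12 + 3) / 4 ≤
      (t / 2 + 1) / 4 + (t / 3 + 3) / 4 + (t / 4 + 1) / 4 + if 10 ≤ t then 1 else 0 := by
  obtain ⟨q, s, hs, rfl⟩ : ∃ q s, s < 48 ∧ t = 48 * q + s :=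
    ⟨t / 48, t % 48, Nat.mod_lt _ (by norm_num), by omega⟩
  interval_cases s <;> split_ifs <;> omega

/-- The coefficients of `Λ d` in the combination of `logSum`s, with `t = n / d`: at most `1`, and
positive only if `10 ≤ t`, or if `t = 1` and `d ≡ 3 (mod 4)`. -/
lemma weight_le (d : ℕ) {t : ℕ} (ht : t ≠ 0) :
    mulCount 3 d t + mulCount 1 d (t / 12) ≤
      mulCount 3 d (t / 2) + mulCount 1 d (t / 3) + mulCount 3 d (t / 4) +
        ((if t = 1 ∧ d % 4 = 3 then 1 else 0) + if 10 ≤ t then 1 else 0) := by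
  have h4 : d % 2 = 0 ∨ d % 4 = 1 ∨ d % 4 = 3 := by omega
  rcases h4 with h | h | h
  · simp [mulCount_of_even _ h]
  · simp only [mulCount_three_of_one h, mulCount_one_of_one h]
    have := weight_one_le t
    omega
  · simp only [mulCount_three_of_three h, mulCount_one_of_three h, h, and_true]
    exact weight_three_le ht

/-- If the prime sought is missing, the prime powers `d ≡ 3 (mod 4)` in `(n/2, n]` are proper
powers, so `ψ - θ` bounds their contribution. -/
lemma logSum_comb_le {n : ℕ}
    (hno : ¬ ∃ p : ℕ, p.Prime ∧ p % 4 = 3 ∧ n < 2 * p ∧ p ≤ n) :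
    logSum 3 n + logSum 1 (n / 12) ≤
      logSum 3 (n / 2) + logSum 1 (n / 3) + logSum 3 (n / 4) +
        ((Chebyshev.psi n - Chebyshev.theta n) + Chebyshev.psi (n / 10 : ℕ)) := by
  have hpsi : Chebyshev.psi (n / 10 : ℕ) = ∑ d ∈ Finset.Ioc 0 n,
      ArithmeticFunction.vonMangoldt d * ((if 10 ≤ n / d then 1 else 0 : ℕ) : ℝ) := by
    rw [Chebyshev.psi, Nat.floor_natCast]
    have hs : Finset.Ioc 0 (n / 10) = (Finset.Ioc 0 n).filter fun d => 10 ≤ n / d := by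
      ext d
      simp only [Finset.mem_Ioc, Finset.mem_filter]
      constructor
      · rintro ⟨h0, h⟩
        exact ⟨⟨h0, h.trans (Nat.div_le_self _ _)⟩, by rw [Nat.le_div_iff_mul_le h0]; omega⟩
      · rintro ⟨⟨h0, -⟩, h⟩
        rw [Nat.le_div_iff_mul_le h0] at h
        exact ⟨h0, by omega⟩
    rw [hs, Finset.sum_filter]
    refine Finset.sum_congr rfl fun d _ => ?_
    split_ifs <;> simp
  rw [hpsi, Chebyshev.psi_sub_theta_eq_sum_not_prime, Nat.floor_natCast, Finset.sum_filter,
    logSum_eq_sum_vonMangoldt 3 n, logSum_div, logSum_div, logSum_div, logSum_div]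
  simp only [← Finset.sum_add_distrib]
  refine Finset.sum_le_sum fun d hd => ?_
  rw [Finset.mem_Ioc] at hd
  have hΛ : 0 ≤ ArithmeticFunction.vonMangoldt d := ArithmeticFunction.vonMangoldt_nonneg
  have ht : n / d ≠ 0 := (Nat.div_pos hd.2 hd.1).ne'
  have hw := weight_le d ht
  have hprime : ArithmeticFunction.vonMangoldt d *
      ((if n / d = 1 ∧ d % 4 = 3 then 1 else 0 : ℕ) : ℝ) ≤
      if ¬ d.Prime then ArithmeticFunction.vonMangoldt d else 0 := by
    by_cases hp : d.Prime
    · have : ¬ (n / d = 1 ∧ d % 4 = 3) := by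
        rintro ⟨h1, h3⟩
        refine hno ⟨d, hp, h3, ?_, hd.2⟩
        have := Nat.lt_mul_div_succ n hd.1
        rw [h1] at this
        omega
      simp [hp, this]
    · simp only [hp, not_false_eq_true, if_true]
      split_ifs <;> simp [hΛ]
  have hw' := mul_le_mul_of_nonneg_left (Nat.cast_le (α := ℝ).2 hw) hΛ
  push_cast at hw' hprime ⊢
  simp only [mul_add] at hw'
  linarith

/-! ### Stirling-type estimates for `logSum` -/

/-- The main term of `logSum r y`. -/
noncomputable def mainTerm (y : ℝ) : ℝ := y / 4 * (Real.log y - 1)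

lemma sub_div_le_log_sub_log {a b : ℝ} (ha : 0 < a) (hb : 0 < b) :
    (b - a) / b ≤ Real.log b - Real.log a := by
  have h := Real.one_sub_inv_le_log_of_pos (div_pos hb ha)
  rw [Real.log_div hb.ne' ha.ne', inv_div] at h
  rwa [sub_div, div_self hb.ne']

lemma le_mainTerm_sub {a b : ℝ} (ha : 0 < a) (hb : 0 < b) :
    (b - a) / 4 * Real.log a ≤ mainTerm b - mainTerm a := by
  have h := sub_div_le_log_sub_log ha hb
  rw [div_le_iff₀ hb] at h
  unfold mainTerm
  linarith

lemma mainTerm_sub_le {a b : ℝ} (ha : 0 < a) (hb : 0 < b) :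
    mainTerm b - mainTerm a ≤ (b - a) / 4 * Real.log b := by
  have h := le_mainTerm_sub hb ha
  linarith

lemma mainTerm_mono {a b : ℝ} (ha : 1 ≤ a) (hab : a ≤ b) : mainTerm a ≤ mainTerm b := by
  have h := le_mainTerm_sub (by linarith : 0 < a) (by linarith : 0 < b)
  have : 0 ≤ (b - a) / 4 * Real.log a := mul_nonneg (by linarith) (Real.log_nonneg ha)
  linarith

lemma logSum_succ (r N : ℕ) :
    logSum r (N + 1) = logSum r N + if (N + 1) % 4 = r then Real.log (N + 1 : ℕ) else 0 := by
  rw [logSum, logSum, ← Finset.insert_Ioc_right_eq_Ioc_add_one (Nat.zero_le N),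
    Finset.sum_insert (by simp), add_comm]

lemma logSum_nonneg (r N : ℕ) : 0 ≤ logSum r N := by
  refine Finset.sum_nonneg fun k _ => ?_
  split_ifs
  · exact Real.log_natCast_nonneg k
  · exact le_rfl

lemma logSum_add_four {r : ℕ} (hr : r < 4) (N : ℕ) :
    ∃ k : ℕ, N + 1 ≤ k ∧ k ≤ N + 4 ∧ logSum r (N + 4) = logSum r N + Real.log k := by
  have h := logSum_succ r (N + 3)
  rw [logSum_succ r (N + 2), logSum_succ r (N + 1), logSum_succ r N] at h
  have h4 : (N + 1) % 4 = r ∨ (N + 2) % 4 = r ∨ (N + 3) % 4 = r ∨ (N + 4) % 4 = r := by omega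
  rcases h4 with h' | h' | h' | h'
  · refine ⟨N + 1, by omega, by omega, ?_⟩
    rw [if_pos h', if_neg (by omega), if_neg (by omega), if_neg (by omega)] at h
    linarith
  · refine ⟨N + 2, by omega, by omega, ?_⟩
    rw [if_neg (by omega), if_pos h', if_neg (by omega), if_neg (by omega)] at h
    linarith
  · refine ⟨N + 3, by omega, by omega, ?_⟩
    rw [if_neg (by omega), if_neg (by omega), if_pos h', if_neg (by omega)] at h
    linarith
  · refine ⟨N + 4, by omega, by omega, ?_⟩
    rw [if_neg (by omega), if_neg (by omega), if_neg (by omega), if_pos h'] at h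
    linarith

lemma logSum_zero (r : ℕ) : logSum r 0 = 0 := by simp [logSum]

lemma log_four_le : Real.log 4 ≤ 7 / 5 := by
  have : Real.log 4 = 2 * Real.log 2 := by
    rw [show (4 : ℝ) = 2 ^ 2 by norm_num, Real.log_pow]; norm_num
  have := Real.log_two_lt_d9
  linarith

lemma logSum_le {r : ℕ} (hr : r < 4) : ∀ N : ℕ, 1 ≤ N →
    logSum r N ≤ mainTerm N + Real.log N + 2
  | 0, h => by omega
  | N + 1, _ => by
    by_cases hN : N < 4
    · have h1 : mainTerm 1 ≤ mainTerm (N + 1 : ℕ) :=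
        mainTerm_mono le_rfl (by push_cast; linarith [(N.cast_nonneg : (0 : ℝ) ≤ N)])
      have h2 : mainTerm 1 = -1 / 4 := by norm_num [mainTerm]
      have h3 : 0 ≤ Real.log (N + 1 : ℕ) := Real.log_natCast_nonneg _
      have h4 := log_four_le
      -- among `1, …, 4` exactly one integer lies in the residue class
      have h5 : logSum r (N + 1) ≤ logSum r 4 := by
        refine Finset.sum_le_sum_of_subset_of_nonneg (Finset.Ioc_subset_Ioc_right (by omega)) ?_
        intro k _ _
        split_ifs
        · exact Real.log_natCast_nonneg k
        · exact le_rfl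
      obtain ⟨k, hk1, hk4, hk⟩ := logSum_add_four hr 0
      have h6 : Real.log k ≤ Real.log 4 :=
        Real.log_le_log (by exact_mod_cast hk1) (by exact_mod_cast hk4)
      rw [logSum_zero, zero_add] at hk
      linarith
    · obtain ⟨M, rfl⟩ : ∃ M, N = M + 4 := ⟨N - 4, by omega⟩
      have ih := logSum_le hr (M + 1) (by omega)
      obtain ⟨k, hk1, hk4, hk⟩ := logSum_add_four hr (M + 1)
      rw [show M + 4 + 1 = M + 1 + 4 by omega, hk]
      have hM : (0 : ℝ) < (M + 1 : ℕ) := by positivity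
      have h6 : Real.log k ≤ Real.log (M + 1 + 4 : ℕ) :=
        Real.log_le_log (by exact_mod_cast (by omega : 0 < k)) (by exact_mod_cast hk4)
      have h7 := le_mainTerm_sub hM (by positivity : (0 : ℝ) < (M + 1 + 4 : ℕ))
      rw [show (((M + 1 + 4 : ℕ) : ℝ) - (M + 1 : ℕ)) / 4 = 1 by push_cast; ring] at h7
      linarith

lemma le_logSum {r : ℕ} (hr : r < 4) : ∀ N : ℕ,
    mainTerm (N + 1) - Real.log (N + 1) - 1 ≤ logSum r N
  | N => by
    by_cases hN : N < 4
    · have h1 : mainTerm (N + 1) ≤ mainTerm 4 :=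
        mainTerm_mono (by linarith [(N.cast_nonneg : (0 : ℝ) ≤ N)])
          (by exact_mod_cast hN)
      have h2 : mainTerm 4 = Real.log 4 - 1 := by norm_num [mainTerm]
      have h3 : 0 ≤ Real.log (N + 1) := Real.log_nonneg (by linarith [(N.cast_nonneg : (0 : ℝ) ≤ N)])
      have h4 := log_four_le
      have h5 := logSum_nonneg r N
      linarith
    · obtain ⟨M, rfl⟩ : ∃ M, N = M + 4 := ⟨N - 4, by omega⟩
      have ih := le_logSum hr M
      obtain ⟨k, hk1, hk4, hk⟩ := logSum_add_four hr M
      rw [hk]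
      have hM : (0 : ℝ) < M + 1 := by positivity
      have h6 : Real.log (M + 1) ≤ Real.log k :=
        Real.log_le_log hM (by exact_mod_cast hk1)
      have h7 := mainTerm_sub_le hM (by positivity : (0 : ℝ) < (M + 4 : ℕ) + 1)
      rw [show ((((M + 4 : ℕ) : ℝ) + 1) - (M + 1)) / 4 = 1 by push_cast; ring] at h7
      linarith

lemma logSum_div_le {r : ℕ} (hr : r < 4) {n m : ℕ} (hm : 0 < m) (hmn : m ≤ n) :
    logSum r (n / m) ≤ mainTerm (n / m) + Real.log n + 2 := by
  have h1 : 1 ≤ n / m := Nat.div_pos hmn hm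
  have h2 := logSum_le hr (n / m) h1
  have h1' : (1 : ℝ) ≤ (n / m : ℕ) := by exact_mod_cast h1
  have h3 : mainTerm (n / m : ℕ) ≤ mainTerm (n / m) := mainTerm_mono h1' Nat.cast_div_le
  have h4 : Real.log (n / m : ℕ) ≤ Real.log n :=
    Real.log_le_log (by linarith) (by exact_mod_cast Nat.div_le_self n m)
  linarith

lemma le_logSum_div {r : ℕ} (hr : r < 4) {n m : ℕ} (hm : 0 < m) (hmn : m ≤ n) :
    mainTerm (n / m) - Real.log (n + 1) - 1 ≤ logSum r (n / m) := by
  have h2 := le_logSum hr (n / m)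
  have hm' : (0 : ℝ) < m := by exact_mod_cast hm
  have h1 : (1 : ℝ) ≤ n / m := by rw [le_div_iff₀ hm', one_mul]; exact_mod_cast hmn
  have h3 : (n / m : ℝ) ≤ (n / m : ℕ) + 1 := by
    rw [div_le_iff₀ hm']
    have := Nat.lt_mul_div_succ n hm
    rw [mul_comm]
    exact_mod_cast this.le
  have h3' := mainTerm_mono h1 h3
  have h4 : Real.log ((n / m : ℕ) + 1) ≤ Real.log (n + 1) :=
    Real.log_le_log (by positivity) (by gcongr; exact Nat.div_le_self n m)
  linarith

/-! ### Large `n` -/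

lemma mainTerm_comb {x : ℝ} (hx : 0 < x) :
    mainTerm x + mainTerm (x / 12) - mainTerm (x / 2) - mainTerm (x / 3) - mainTerm (x / 4) =
      x * (5 / 24 * Real.log 2 + 1 / 16 * Real.log 3) := by
  have h4 : Real.log 4 = 2 * Real.log 2 := by
    rw [show (4 : ℝ) = 2 ^ 2 by norm_num, Real.log_pow]; norm_num
  have h12 : Real.log 12 = Real.log 4 + Real.log 3 := by
    rw [← Real.log_mul (by norm_num) (by norm_num)]; norm_num
  simp only [mainTerm]
  rw [Real.log_div hx.ne' (by norm_num), Real.log_div hx.ne' (by norm_num),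
    Real.log_div hx.ne' (by norm_num), Real.log_div hx.ne' (by norm_num), h12, h4]
  ring

lemma exists_prime_of_large {n : ℕ} (hn : 10 ^ 6 ≤ n) :
    ∃ p : ℕ, p.Prime ∧ p % 4 = 3 ∧ n < 2 * p ∧ p ≤ n := by
  by_contra hno
  have hcomb := logSum_comb_le hno
  have hnR : (10 : ℝ) ^ 6 ≤ n := by exact_mod_cast hn
  have hn0 : (0 : ℝ) < n := by linarith
  have a1 := le_logSum_div (r := 3) (by norm_num) one_pos (by omega : 1 ≤ n)
  have a12 := le_logSum_div (r := 1) (by norm_num) (by norm_num : 0 < 12) (by omega : 12 ≤ n)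
  have a2 := logSum_div_le (r := 3) (by norm_num) (by norm_num : 0 < 2) (by omega : 2 ≤ n)
  have a3 := logSum_div_le (r := 1) (by norm_num) (by norm_num : 0 < 3) (by omega : 3 ≤ n)
  have a4 := logSum_div_le (r := 3) (by norm_num) (by norm_num : 0 < 4) (by omega : 4 ≤ n)
  rw [Nat.div_one, Nat.cast_one, div_one] at a1
  push_cast at a12 a2 a3 a4
  have hmain := mainTerm_comb hn0
  have b1 := Chebyshev.psi_sub_theta_le (x := (n : ℝ)) (by linarith)
  have b2 : Chebyshev.psi (n / 10 : ℕ) ≤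
      Real.log 4 * (n / 10) + 2 * √(n : ℝ) * Real.log n := by
    have hm1 : (1 : ℝ) ≤ (n / 10 : ℕ) := by exact_mod_cast (by omega : 1 ≤ n / 10)
    have hm2 : ((n / 10 : ℕ) : ℝ) ≤ n / 10 := by exact_mod_cast Nat.cast_div_le
    have hm3 : ((n / 10 : ℕ) : ℝ) ≤ n := by linarith
    refine (Chebyshev.psi_le hm1).trans ?_
    have : 0 ≤ Real.log (n / 10 : ℕ) := Real.log_nonneg hm1
    gcongr
  have hlog4 : Real.log 4 = 2 * Real.log 2 := by
    rw [show (4 : ℝ) = 2 ^ 2 by norm_num, Real.log_pow]; norm_num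
  have hlog3 : (108 : ℝ) / 100 ≤ Real.log 3 := by
    have h := Real.log_le_log (by norm_num) (by norm_num : (2 : ℝ) ^ 11 ≤ 3 ^ 7)
    rw [Real.log_pow, Real.log_pow] at h
    have := Real.log_two_gt_d9
    push_cast at h
    linarith
  have hlog2 := Real.log_two_gt_d9
  have hlog2' := Real.log_two_lt_d9
  set s := √(n : ℝ) with hs
  have hs3 : 1000 ≤ s := by
    rw [hs]
    exact Real.le_sqrt_of_sq_le (by linarith)
  have hss : (n : ℝ) = s * s := (Real.mul_self_sqrt hn0.le).symm
  -- the tangent line to `log` at `1024 = 2 ^ 10`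
  have hlogs : Real.log s ≤ s / 1024 + 6 := by
    have h := Real.log_le_sub_one_of_pos (by positivity : 0 < s / 1024)
    rw [Real.log_div (by positivity) (by norm_num), show (1024 : ℝ) = 2 ^ 10 by norm_num,
      Real.log_pow] at h
    push_cast at h
    linarith
  have hlogn : Real.log n = 2 * Real.log s := by
    rw [hss, Real.log_mul (by positivity) (by positivity)]; ring
  have hlogn1 : Real.log (n + 1) ≤ Real.log n + 1 := by
    have h := sub_div_le_log_sub_log (by linarith : (0 : ℝ) < n + 1) hn0
    have h' : (-1 : ℝ) ≤ (n - (n + 1)) / n := by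
      rw [le_div_iff₀ hn0]; linarith
    linarith
  have hmul : s * Real.log s ≤ s * (s / 1024 + 6) := by gcongr
  have hc : (n : ℝ) * (732 / 10000) ≤
      n * (5 / 24 * Real.log 2 + 1 / 16 * Real.log 3 - Real.log 4 / 10) := by
    gcongr
    linarith
  rw [hlogn] at b1 b2 a2 a3 a4 hlogn1
  have hfin : (n : ℝ) * (732 / 10000) ≤
      8 * (s * (s / 1024 + 6)) + 10 * (s / 1024 + 6) + 10 := by
    linarith
  rw [hss] at hfin
  nlinarith [mul_le_mul_of_nonneg_right hs3 (by linarith : 0 ≤ s)]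

theorem stmt_16 (n : ℕ) (hn : 7 ≤ n) :
    ∃ p : ℕ, p.Prime ∧ p % 4 = 3 ∧ n < 2 * p ∧ p ≤ n := by
  rcases le_or_gt (10 ^ 6) n with h | h
  · exact exists_prime_of_large h
  -- each prime in the list is at most twice its predecessor
  have key : ∀ p q : ℕ, p.Prime → p % 4 = 3 → q ≤ 2 * p → p ≤ n → n < q →
      ∃ p : ℕ, p.Prime ∧ p % 4 = 3 ∧ n < 2 * p ∧ p ≤ n :=
    fun p q hp h3 hq hpn hnq => ⟨p, hp, h3, by omega, hpn⟩
  by_contra hno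
  have step : ∀ p q : ℕ, p.Prime → p % 4 = 3 → q ≤ 2 * p → p ≤ n → q ≤ n :=
    fun p q hp h3 hq hpn => not_lt.1 fun hnq => hno (key p q hp h3 hq hpn hnq)
  have h := step 7 11 (by norm_num) rfl (by norm_num) hn
  have h := step 11 19 (by norm_num) rfl (by norm_num) h
  have h := step 19 31 (by norm_num) rfl (by norm_num) h
  have h := step 31 59 (by norm_num) rfl (by norm_num) h
  have h := step 59 107 (by norm_num) rfl (by norm_num) h
  have h := step 107 211 (by norm_num) rfl (by norm_num) h
  have h := step 211 419 (by norm_num) rfl (by norm_num) h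
  have h := step 419 827 (by norm_num) rfl (by norm_num) h
  have h := step 827 1627 (by norm_num) rfl (by norm_num) h
  have h := step 1627 3251 (by norm_num) rfl (by norm_num) h
  have h := step 3251 6491 (by norm_num) rfl (by norm_num) h
  have h := step 6491 12979 (by norm_num) rfl (by norm_num) h
  have h := step 12979 25951 (by norm_num) rfl (by norm_num) h
  have h := step 25951 51899 (by norm_num) rfl (by norm_num) h
  have h := step 51899 103787 (by norm_num) rfl (by norm_num) h
  have h := step 103787 207563 (by norm_num) rfl (by norm_num) h
  have h := step 207563 415111 (by norm_num) rfl (by norm_num) h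
  have h := step 415111 830191 (by norm_num) rfl (by norm_num) h
  have h := step 830191 (10 ^ 6) (by norm_num) rfl (by norm_num) h
  omega
end

section
/- For a natural number n ≥ 1, n! can be written as a sum of two squares of integers (i.e., there exist integers a, b with n! = a² + b²) if and only if n ∈ {1, 2, 6}. -/
/-!
A positive integer is a sum of two squares iff every prime `p ≡ 3 (mod 4)` divides it to an even
power. So for `n ∉ {1, 2, 6}` a prime `p ≡ 3 (mod 4)` with odd exponent in `n!` is needed. Instead
of a Bertrand postulate for the progression `4k + 3`, the following direct contradiction is used
for large `n`.

Let `C = n.choose (n / 2)` and `R = 1 · 5 · 9 ⋯`, the product of all `m ≤ n` with `m ≡ 1 (mod 4)`.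
If all primes `p ≡ 3 (mod 4)` have even exponent in `n!`, then those with `p > √n` have
`n / p` even and so do not divide `C`. For a prime `p ≡ 1 (mod 4)`, each power `p ^ i` contributes
to `C` at most `1` if `n / p ^ i` is odd and `0` otherwise, whereas its contribution to
`R / (n / 4)!` is `1` unless `4 ∣ n / p ^ i`. Hence, up to a power of `2` at most `2 ^ (n / 4)` and
the contribution of the primes up to `√n` to `C`, which is at most `n ^ √n`, the number
`C * (n / 4)!` divides `R` (`choose_mul_factorial_dvd`). Since `C` is about `2 ^ n` and
`R / (n / 4)!` is about `2 ^ (n / 2)`, this gives `2 ^ (n / 4) ≤ n ^ (√n + O(1))`, which fails for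
`n ≥ 2 ^ 14`. Below this bound, the prime `3` (for `3 ≤ n ≤ 5`) or a member of a chain of primes
`p ≡ 3 (mod 4)` starting at `7`, each less than twice the preceding one, satisfies
`p ≤ n < 2 * p` and so has exponent `1` in `n!`.
-/

open Finset Nat

/-- The product of the positive integers `m ≤ n` with `m ≡ 1 (mod 4)`. -/
def prodOneModFour (n : ℕ) : ℕ := ∏ k ∈ range ((n + 3) / 4), (4 * k + 1)

lemma prodOneModFour_ne_zero (n : ℕ) : prodOneModFour n ≠ 0 :=
  prod_ne_zero_iff.2 fun _ _ => by omega

/-- Multiples of `q` that are `1` modulo `4` are the `q * l` with `l ≡ r (mod 4)`, where `r` is the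
inverse of `q` modulo `4`; the left side counts such `l ≤ n / q`. -/
lemma le_card_dvd (n q r : ℕ) (hqr : q * r % 4 = 1) (hr : r ≤ 3) :
    (n / q + 4 - r) / 4 ≤ #{k ∈ range ((n + 3) / 4) | q ∣ 4 * k + 1} := by
  have hq : 0 < q := Nat.pos_of_ne_zero (by rintro rfl; simp at hqr)
  have key (t : ℕ) : 4 * ((q * (4 * t + r) - 1) / 4) + 1 = q * (4 * t + r) := by
    have : q * (4 * t + r) = 4 * (q * t) + q * r := by ring
    omega
  rw [← card_range ((n / q + 4 - r) / 4)]
  refine card_le_card_of_injOn (fun t => (q * (4 * t + r) - 1) / 4) ?_ ?_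
  · intro t ht
    have ht' : t < (n / q + 4 - r) / 4 := by simpa using ht
    have h1 : 4 * t + r ≤ n / q := by omega
    have h2 : q * (4 * t + r) ≤ n :=
      (Nat.mul_le_mul_left q h1).trans (Nat.mul_div_le n q)
    have := key t
    simp only [coe_filter, mem_range, Set.mem_ofPred_eq]
    exact ⟨by omega, by rw [this]; exact dvd_mul_right _ _⟩
  · intro t _ t' _ h
    have h1 := key t
    have h2 := key t'
    simp only at h
    rw [h, h2] at h1
    have := Nat.eq_of_mul_eq_mul_left hq h1
    omega

/-- Legendre's formula for `prodOneModFour`. -/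
lemma factorization_prodOneModFour {p : ℕ} (hp : p.Prime) (n : ℕ) :
    (prodOneModFour n).factorization p =
      ∑ i ∈ Ico 1 (n + 1), #{k ∈ range ((n + 3) / 4) | p ^ i ∣ 4 * k + 1} := by
  have h : (prodOneModFour n).factorization p =
      ∑ k ∈ range ((n + 3) / 4), (4 * k + 1).factorization p := by
    rw [prodOneModFour, Nat.factorization_prod (fun _ _ => by omega), Finsupp.finsetSum_apply]
  rw [h]
  simp only [card_filter]
  rw [sum_comm]
  refine sum_congr rfl fun k hk => ?_
  rw [← card_filter]
  refine factorization_eq_card_pow_dvd_of_lt hp (by omega) ?_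
  have : k < (n + 3) / 4 := by simpa using hk
  calc 4 * k + 1 < n + 1 := by omega
    _ < p ^ (n + 1) := Nat.lt_pow_self hp.one_lt

lemma factorization_factorial_eq {p : ℕ} (hp : p.Prime) {m n : ℕ} (h : m ≤ n) :
    (m !).factorization p = ∑ i ∈ Ico 1 (n + 1), m / p ^ i :=
  factorization_factorial hp (Nat.lt_succ_of_le ((Nat.log_le_self p m).trans h))

lemma factorization_factorial_of_lt_sq {p n : ℕ} (hp : p.Prime) (h : n < p ^ 2) :
    (n !).factorization p = n / p := by
  rw [factorization_factorial hp (b := 2) (Nat.log_lt_of_lt_pow' (by norm_num) h)]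
  simp

lemma factorization_choose_add (p n : ℕ) :
    (n.choose (n / 2)).factorization p + ((n / 2)!).factorization p +
      ((n - n / 2)!).factorization p = (n !).factorization p := by
  have h2 : n / 2 ≤ n := Nat.div_le_self n 2
  have hc : n.choose (n / 2) ≠ 0 := (Nat.choose_pos h2).ne'
  rw [← Nat.choose_mul_factorial_mul_factorial h2,
    Nat.factorization_mul (mul_ne_zero hc (factorial_ne_zero _)) (factorial_ne_zero _),
    Nat.factorization_mul hc (factorial_ne_zero _)]
  simp

lemma factorization_div_four_le {p : ℕ} (hp : p.Prime) (hodd : p % 2 = 1) (n : ℕ) :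
    ((n / 4)!).factorization p ≤ (prodOneModFour n).factorization p := by
  rw [factorization_factorial_eq hp (Nat.div_le_self n 4), factorization_prodOneModFour hp]
  refine sum_le_sum fun i _ => ?_
  have hq : p ^ i % 2 = 1 := by
    rw [Nat.pow_mod, hodd]; simp
  have h4 : n / 4 / p ^ i = n / p ^ i / 4 := by
    rw [Nat.div_div_eq_div_mul, Nat.div_div_eq_div_mul, mul_comm]
  have h13 : p ^ i % 4 = 1 ∨ p ^ i % 4 = 3 := by omega
  rcases h13 with h | h
  · exact le_trans (by omega) (le_card_dvd n (p ^ i) 1 (by omega) (by omega))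
  · exact le_trans (by omega) (le_card_dvd n (p ^ i) 3 (by omega) (by omega))

lemma factorization_choose_add_le {p : ℕ} (hp : p.Prime) (h1 : p % 4 = 1) (n : ℕ) :
    (n.choose (n / 2)).factorization p + ((n / 4)!).factorization p ≤
      (prodOneModFour n).factorization p := by
  have hC := factorization_choose_add p n
  rw [factorization_factorial_eq hp (Nat.div_le_self n 2),
    factorization_factorial_eq hp (Nat.sub_le n (n / 2)),
    factorization_factorial_eq hp le_rfl] at hC
  rw [factorization_factorial_eq hp (Nat.div_le_self n 4), factorization_prodOneModFour hp]
  have key : ∑ i ∈ Ico 1 (n + 1), n / p ^ i + ∑ i ∈ Ico 1 (n + 1), n / 4 / p ^ i ≤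
      ∑ i ∈ Ico 1 (n + 1), n / 2 / p ^ i + ∑ i ∈ Ico 1 (n + 1), (n - n / 2) / p ^ i +
      ∑ i ∈ Ico 1 (n + 1), #{k ∈ range ((n + 3) / 4) | p ^ i ∣ 4 * k + 1} := by
    simp only [← sum_add_distrib]
    refine sum_le_sum fun i _ => ?_
    have hq : p ^ i % 4 = 1 := by
      rw [Nat.pow_mod, h1]; simp
    have h4 : n / 4 / p ^ i = n / p ^ i / 4 := by
      rw [Nat.div_div_eq_div_mul, Nat.div_div_eq_div_mul, mul_comm]
    have h2 : n / 2 / p ^ i = n / p ^ i / 2 := by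
      rw [Nat.div_div_eq_div_mul, Nat.div_div_eq_div_mul, mul_comm]
    have h2' : n / 2 / p ^ i ≤ (n - n / 2) / p ^ i := Nat.div_le_div_right (by omega)
    have := le_card_dvd n (p ^ i) 1 (by omega) (by omega)
    omega
  omega

/-- A prime `p > √n` with even exponent in `n!` does not divide the middle binomial coefficient. -/
lemma factorization_choose_eq_zero {p n : ℕ} (hp : p.Prime) (h : n < p ^ 2)
    (he : Even ((n !).factorization p)) : (n.choose (n / 2)).factorization p = 0 := by
  have hC := factorization_choose_add p n
  rw [factorization_factorial_of_lt_sq hp ((Nat.div_le_self n 2).trans_lt h),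
    factorization_factorial_of_lt_sq hp ((Nat.sub_le n _).trans_lt h)] at hC
  rw [factorization_factorial_of_lt_sq hp h] at hC he
  obtain ⟨k, hk⟩ := he
  have h2 : n / 2 / p = n / p / 2 := by
    rw [Nat.div_div_eq_div_mul, Nat.div_div_eq_div_mul, mul_comm]
  have h2' : n / 2 / p ≤ (n - n / 2) / p := Nat.div_le_div_right (by omega)
  omega

/-- The product over `p ≤ √n` bounds the contribution of the small primes, and the factor
`2 ^ (n / 4)` makes up for `prodOneModFour n` being odd. -/
lemma choose_mul_factorial_dvd (n : ℕ) (hn : 4 ≤ n)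
    (he : ∀ p : ℕ, p.Prime → p % 4 = 3 → Even ((n !).factorization p)) :
    n.choose (n / 2) * (n / 4)! ∣ prodOneModFour n *
      (∏ p ∈ Icc 1 (sqrt n), p ^ (n.choose (n / 2)).factorization p) * 2 ^ (n / 4) := by
  have hc : n.choose (n / 2) ≠ 0 := (Nat.choose_pos (Nat.div_le_self n 2)).ne'
  have hR := prodOneModFour_ne_zero n
  set D := ∏ p ∈ Icc 1 (sqrt n), p ^ (n.choose (n / 2)).factorization p with hDdef
  have hD : D ≠ 0 := prod_ne_zero_iff.2 fun p hp => by
    have : 1 ≤ p := (mem_Icc.1 hp).1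
    positivity
  have hD' (p : ℕ) (hp : p.Prime) (hs : p ≤ sqrt n) :
      (n.choose (n / 2)).factorization p ≤ D.factorization p :=
    (hp.pow_dvd_iff_le_factorization hD).1
      (dvd_prod_of_mem (fun p => p ^ (n.choose (n / 2)).factorization p)
        (mem_Icc.2 ⟨hp.one_le, hs⟩))
  rw [← Nat.factorization_prime_le_iff_dvd (mul_ne_zero hc (factorial_ne_zero _))
    (mul_ne_zero (mul_ne_zero hR hD) (by positivity))]
  intro p hp
  rw [Nat.factorization_mul hc (factorial_ne_zero _),
    Nat.factorization_mul (mul_ne_zero hR hD) (by positivity), Nat.factorization_mul hR hD]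
  simp only [Finsupp.add_apply]
  have hlarge (hs : ¬ p ≤ sqrt n) : n < p ^ 2 := by
    rw [sq]; exact Nat.sqrt_lt.1 (not_le.1 hs)
  rcases hp.eq_two_or_odd with rfl | hodd
  · have h1 : ((n / 4)!).factorization 2 ≤ n / 4 := by
      simpa using factorization_factorial_le_div_pred prime_two (n / 4)
    have h2 : (2 ^ (n / 4)).factorization 2 = n / 4 := by
      simp [Nat.prime_two.factorization_self]
    have h3 : (n.choose (n / 2)).factorization 2 ≤ D.factorization 2 :=
      hD' 2 hp (Nat.le_sqrt.2 (by omega))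
    omega
  · by_cases hs : p ≤ sqrt n
    · have := hD' p hp hs
      have := factorization_div_four_le hp hodd n
      omega
    · have h13 : p % 4 = 1 ∨ p % 4 = 3 := by omega
      rcases h13 with h | h
      · have := factorization_choose_add_le hp h n
        omega
      · have := factorization_choose_eq_zero hp (hlarge hs) (he p hp h)
        have := factorization_div_four_le hp hodd n
        omega

lemma prodOneModFour_le (n : ℕ) :
    prodOneModFour n ≤ 4 ^ (n / 4 + 1) * ((n / 4 + 1) * (n / 4)!) := by
  have h (m : ℕ) : ∏ k ∈ range m, (4 * k + 1) ≤ 4 ^ m * m ! := by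
    induction m with
    | zero => simp
    | succ m ih =>
      rw [prod_range_succ, factorial_succ, pow_succ]
      calc _ ≤ (4 ^ m * m !) * (4 * (m + 1)) := Nat.mul_le_mul ih (by omega)
        _ = _ := by ring
  have hm : (n + 3) / 4 ≤ n / 4 + 1 := by omega
  calc prodOneModFour n ≤ 4 ^ ((n + 3) / 4) * ((n + 3) / 4)! := h _
    _ ≤ 4 ^ (n / 4 + 1) * (n / 4 + 1)! :=
      Nat.mul_le_mul (Nat.pow_le_pow_right (by norm_num) hm) (Nat.factorial_le hm)
    _ = _ := by rw [factorial_succ]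

lemma two_pow_le (n : ℕ) : 2 ^ n ≤ (n + 1) * n.choose (n / 2) := by
  rw [← Nat.sum_range_choose]
  calc _ ≤ ∑ _k ∈ range (n + 1), n.choose (n / 2) := sum_le_sum fun k _ => choose_le_middle k n
    _ = _ := by simp

/-- Comparison of sizes in `choose_mul_factorial_dvd`. -/
lemma two_pow_div_four_le (n : ℕ) (hn : 4 ≤ n)
    (he : ∀ p : ℕ, p.Prime → p % 4 = 3 → Even ((n !).factorization p)) :
    2 ^ (n / 4) ≤ 4 * (n + 1) * (n / 4 + 1) * n ^ sqrt n := by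
  have hdvd := choose_mul_factorial_dvd n hn he
  set C := n.choose (n / 2) with hC
  set D := ∏ p ∈ Icc 1 (sqrt n), p ^ C.factorization p with hDdef
  have hDpos : 0 < D := prod_pos fun p hp => by
    have : 1 ≤ p := (mem_Icc.1 hp).1
    positivity
  have hD : D ≤ n ^ sqrt n := by
    calc D ≤ ∏ _p ∈ Icc 1 (sqrt n), n :=
          prod_le_prod' fun p _ => pow_factorization_choose_le (by omega)
      _ = _ := by simp
  have hRpos := Nat.pos_of_ne_zero (prodOneModFour_ne_zero n)
  have h1 := Nat.le_of_dvd (by positivity) hdvd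
  set u := n / 4 with hu
  have h2 : C ≤ 4 ^ (u + 1) * (u + 1) * n ^ sqrt n * 2 ^ u := by
    refine Nat.le_of_mul_le_mul_right (h1.trans ?_) (factorial_pos u)
    calc _ ≤ (4 ^ (u + 1) * ((u + 1) * u !)) * n ^ sqrt n * 2 ^ u := by
          gcongr
          exact prodOneModFour_le n
      _ = _ := by ring
  have h3 : 2 ^ (4 * u) ≤ (n + 1) * C :=
    (Nat.pow_le_pow_right (by norm_num) (by omega)).trans (two_pow_le n)
  have h4 : (2 ^ u) * 8 ^ u ≤ (4 * (n + 1) * (u + 1) * n ^ sqrt n) * 8 ^ u := by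
    calc (2 ^ u) * 8 ^ u = 2 ^ (4 * u) := by rw [← mul_pow, pow_mul]; norm_num
      _ ≤ (n + 1) * C := h3
      _ ≤ (n + 1) * (4 ^ (u + 1) * (u + 1) * n ^ sqrt n * 2 ^ u) := Nat.mul_le_mul_left _ h2
      _ = (4 * (n + 1) * (u + 1) * n ^ sqrt n) * (4 ^ u * 2 ^ u) := by ring
      _ = _ := by rw [← mul_pow]; norm_num
  exact Nat.le_of_mul_le_mul_right h4 (by positivity)

lemma size_contradiction (n : ℕ) (hn : 2 ^ 14 ≤ n) :
    4 * (n + 1) * (n / 4 + 1) * n ^ sqrt n < 2 ^ (n / 4) := by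
  set s := sqrt n with hs
  have hs128 : 128 ≤ s := Nat.le_sqrt.2 (by omega)
  have hsn : s * s ≤ n := Nat.sqrt_le n
  have hns : n < (s + 1) * (s + 1) := Nat.lt_succ_sqrt n
  obtain ⟨k, hk⟩ : ∃ k, k = Nat.log 2 (s + 1) := ⟨_, rfl⟩
  have hk1 : 2 ^ k ≤ s + 1 := hk ▸ Nat.pow_log_le_self 2 (by omega)
  have hk2 : s + 1 < 2 ^ (k + 1) := hk ▸ Nat.lt_pow_succ_log_self (by norm_num) _
  have hk7 : 7 ≤ k := hk ▸ Nat.le_log_of_pow_le (by norm_num) (by omega)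
  have hpow (j : ℕ) (hj : 7 ≤ j) : 10 * (j + 1) + 1 ≤ 2 ^ j := by
    induction j, hj using Nat.le_induction with
    | base => norm_num
    | succ j _ ih => rw [pow_succ]; omega
  have hks : 10 * (k + 1) ≤ s := by have := hpow k hk7; omega
  have hbase : n < 2 ^ (2 * (k + 1)) := by
    calc n < (s + 1) * (s + 1) := hns
      _ ≤ 2 ^ (k + 1) * 2 ^ (k + 1) := Nat.mul_le_mul hk2.le hk2.le
      _ = _ := by rw [← pow_add]; congr 1; ring
  have hexp : 2 * (k + 1) * (s + 3) ≤ n / 4 := by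
    have : 2 * (k + 1) * (s + 3) * 4 ≤ s * s := by nlinarith
    omega
  calc 4 * (n + 1) * (n / 4 + 1) * n ^ s ≤ n * n * n * n ^ s := by
        have : 4 * (n + 1) * (n / 4 + 1) ≤ n * n * n := by
          have h1 : 4 * (n + 1) ≤ n * n := by nlinarith
          exact Nat.mul_le_mul h1 (by omega)
        exact Nat.mul_le_mul_right _ this
    _ = n ^ (s + 3) := by ring
    _ < (2 ^ (2 * (k + 1))) ^ (s + 3) := Nat.pow_lt_pow_left hbase (by omega)
    _ = 2 ^ (2 * (k + 1) * (s + 3)) := by rw [← pow_mul]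
    _ ≤ _ := Nat.pow_le_pow_right (by norm_num) hexp

lemma not_even_of_prime {n p : ℕ} (hp : p.Prime) (h3 : p % 4 = 3) (h1 : p ≤ n) (h2 : n < 2 * p)
    (he : ∀ p : ℕ, p.Prime → p % 4 = 3 → Even ((n !).factorization p)) : False := by
  have hsq : n < p ^ 2 := by nlinarith [hp.two_le]
  have := he p hp h3
  rw [factorization_factorial_of_lt_sq hp hsq, Nat.div_eq_of_lt_le (k := 1) (by omega) (by omega)]
    at this
  exact absurd this (by decide)

open Nat in
theorem stmt_17 (n : ℕ) (hn : 1 ≤ n) :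
    (∃ a b : ℤ, (n ! : ℤ) = a ^ 2 + b ^ 2) ↔ n = 1 ∨ n = 2 ∨ n = 6 := by
  constructor
  · rintro ⟨a, b, hab⟩
    have hsum : ∃ x y : ℕ, n ! = x ^ 2 + y ^ 2 :=
      ⟨a.natAbs, b.natAbs, by zify; simpa using hab⟩
    have he (p : ℕ) (hp : p.Prime) (h3 : p % 4 = 3) : Even ((n !).factorization p) := by
      by_cases hd : p ∣ (n !)
      · rw [Nat.factorization_def _ hp]
        exact Nat.eq_sq_add_sq_iff.1 hsum p
          (Nat.mem_primeFactors.2 ⟨hp, hd, factorial_ne_zero n⟩) h3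
      · rw [Nat.factorization_eq_zero_of_not_dvd hd]
        exact Even.zero
    have hlt : n < 2 ^ 14 := by
      by_contra! h
      exact absurd (two_pow_div_four_le n (by omega) he) (not_le.2 (size_contradiction n h))
    by_contra hne
    have hchain (p : ℕ) (hp : p.Prime) (h3 : p % 4 = 3) : ¬ (p ≤ n ∧ n < 2 * p) :=
      fun h => not_even_of_prime hp h3 h.1 h.2 he
    -- the intervals `[p, 2p)` for these primes cover all `3 ≤ n < 2 ^ 14` except `n = 6`
    have := hchain 3 (by norm_num) (by norm_num)
    have := hchain 7 (by norm_num) (by norm_num)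
    have := hchain 11 (by norm_num) (by norm_num)
    have := hchain 19 (by norm_num) (by norm_num)
    have := hchain 31 (by norm_num) (by norm_num)
    have := hchain 59 (by norm_num) (by norm_num)
    have := hchain 107 (by norm_num) (by norm_num)
    have := hchain 211 (by norm_num) (by norm_num)
    have := hchain 419 (by norm_num) (by norm_num)
    have := hchain 827 (by norm_num) (by norm_num)
    have := hchain 1627 (by norm_num) (by norm_num)
    have := hchain 3251 (by norm_num) (by norm_num)
    have := hchain 6491 (by norm_num) (by norm_num)
    have := hchain 12979 (by norm_num) (by norm_num)
    omega
  · rintro (rfl | rfl | rfl)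
    · exact ⟨1, 0, by norm_num⟩
    · exact ⟨1, 1, by norm_num⟩
    · exact ⟨24, 12, by norm_num [Nat.factorial]⟩
end
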